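/- Let r ∈ ℕ with r ≥ 2 or r = ∞, and let f be a volume-preserving C^r diffeomorphism of T², isotopic to the identity, regularly semi-conjugate to T_ω̄ with ω̄ totally irrational and super-Liouvillean; let G_f be the group of centralizers of f in Diff^{r−1}(T², Vol) ∩ Homeo_*(T²), and fix x₀ ∈ T² with dense f-orbit. Then both maps φ₁: G_f → ℝ²/ℤ², φ₁(g) = ρ(g), and φ₂: G_f → T², φ₂(g) = g(x₀), are injective; moreover φ₁ is an injective group homomorphism with dense image. -/

import Mathlib

open Filter Topology MeasureTheory

noncomputable section

/-- The plane ℝ². -/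
abbrev R2 : Type := ℝ × ℝ

/-- The Euclidean norm on ℝ². -/
def enorm2 (v : R2) : ℝ := Real.sqrt (v.1 ^ 2 + v.2 ^ 2)

/-- The two-torus 𝕋² = ℝ²/ℤ². -/
abbrev T2 : Type := AddCircle (1 : ℝ) × AddCircle (1 : ℝ)

/-- The covering projection π : ℝ² → 𝕋². -/
def pr2 (v : R2) : T2 := ((v.1 : AddCircle (1 : ℝ)), (v.2 : AddCircle (1 : ℝ)))

/-- The integer vector (v₁, v₂) regarded as a point of ℝ². -/
def intVec (v : ℤ × ℤ) : R2 := ((v.1 : ℝ), (v.2 : ℝ))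

/-- The distance on 𝕋² induced by the Euclidean metric on ℝ². -/
def distT2 (x y : T2) : ℝ :=
  sInf {r | ∃ a b : R2, pr2 a = x ∧ pr2 b = y ∧ r = enorm2 (a - b)}

/-- The C⁰ distance between two maps of 𝕋². -/
def dC0 (f g : T2 → T2) : ℝ := ⨆ x : T2, distT2 (f x) (g x)

/-- `F : ℝ² → ℝ²` is a lift of `f : 𝕋² → 𝕋²`, i.e. π ∘ F = f ∘ π. -/
def IsLift (F : R2 → R2) (f : T2 → T2) : Prop := ∀ z : R2, pr2 (F z) = f (pr2 z)

/-- `F` commutes with the deck transformations of π : ℝ² → 𝕋². -/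
def Equivariant (F : R2 → R2) : Prop :=
  ∀ (z : R2) (v : ℤ × ℤ), F (z + intVec v) = F z + intVec v

/-- `f` is a homeomorphism of 𝕋² isotopic to the identity (equivalently, admitting an
equivariant lift to ℝ²). -/
def IsotopicToId (f : T2 → T2) : Prop :=
  IsHomeomorph f ∧ ∃ F : R2 → R2, IsHomeomorph F ∧ IsLift F f ∧ Equivariant F

/-- The Misiurewicz–Ziemian rotation set of a lift `F`. -/
def rotSet (F : R2 → R2) : Set R2 :=
  {v | ∃ (z : ℕ → R2) (n : ℕ → ℕ), Tendsto n atTop atTop ∧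
      Tendsto (fun i => ((n i : ℝ))⁻¹ • (F^[n i] (z i) - z i)) atTop (𝓝 v)}

/-- Bounded mean motion, with bound κ, for a lift `F` with rotation vector `ω`:
‖Fⁿ(z) − z − nω‖ ≤ κ for all z and n. -/
def BoundedMeanMotion (F : R2 → R2) (ω : R2) (κ : ℝ) : Prop :=
  ∀ (z : R2) (n : ℕ), enorm2 (F^[n] z - z - (n : ℝ) • ω) ≤ κ

/-- The standard scalar product on ℝ². -/
def inner2 (u v : R2) : ℝ := u.1 * v.1 + u.2 * v.2

/-- v^⊥ = (−v₂, v₁)/‖v‖. -/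
def perp2 (v : R2) : R2 := (-v.2 / enorm2 v, v.1 / enorm2 v)

/-- Bounded deviation parallel to `v`, with bound κ, for a lift `F` with rotation vector `ω`:
|⟨Fⁿ(z) − z − nω, v^⊥⟩| ≤ κ for all z and n. -/
def BoundedDeviation (F : R2 → R2) (ω : R2) (v : R2) (κ : ℝ) : Prop :=
  ∀ (z : R2) (n : ℕ), |inner2 (F^[n] z - z - (n : ℝ) • ω) (perp2 v)| ≤ κ

/-- ‖ω‖_{𝕋²} = min over integer vectors z of ‖ω − z‖. -/
def normT2 (ω : R2) : ℝ := ⨅ v : ℤ × ℤ, enorm2 (ω - intVec v)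

/-- The super-Liouvillean condition: liminf_{n→∞} n⁻¹ ln ‖nω‖_{𝕋²} = −∞. -/
def SuperLiouville (ω : R2) : Prop :=
  ∀ M : ℝ, ∃ᶠ n : ℕ in atTop, (n : ℝ)⁻¹ * Real.log (normT2 ((n : ℝ) • ω)) < M

/-- The strong super-Liouvillean condition: liminf_{n→∞} n⁻¹ aⁿ ln ‖nω‖_{𝕋²} = −∞. -/
def StrongSuperLiouville (a : ℝ) (ω : R2) : Prop :=
  ∀ M : ℝ, ∃ᶠ n : ℕ in atTop, (n : ℝ)⁻¹ * a ^ n * Real.log (normT2 ((n : ℝ) • ω)) < M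

/-- ω ∈ ℝ² is irrational if ω ∉ ℚ². -/
def IrrationalVec (ω : R2) : Prop := ¬ ∃ q : ℚ × ℚ, ω = ((q.1 : ℝ), (q.2 : ℝ))

/-- ω is totally irrational if ω₁, ω₂, 1 are rationally independent. -/
def TotallyIrrationalVec (ω : R2) : Prop :=
  ∀ d1 d2 e : ℤ, (d1 : ℝ) * ω.1 + (d2 : ℝ) * ω.2 + (e : ℝ) = 0 → d1 = 0 ∧ d2 = 0 ∧ e = 0

/-- ω is semi-irrational: irrational but not totally irrational. -/
def SemiIrrationalVec (ω : R2) : Prop := IrrationalVec ω ∧ ¬ TotallyIrrationalVec ω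

/-- `v` is a character vector of the semi-irrational vector ω. -/
def IsCharacterVector (ω : R2) (v : R2) : Prop :=
  ∃ c d : ℤ, Int.gcd c d = 1 ∧ (∃ e : ℚ, (c : ℝ) * ω.1 + (d : ℝ) * ω.2 + (e : ℝ) = 0) ∧
    v = ((d : ℝ), (-c : ℝ))

/-- `f` is Hölder continuous with exponent `a`. -/
def HolderMap (a : ℝ) (f : T2 → T2) : Prop :=
  ∃ C : ℝ, ∀ x y : T2, distT2 (f x) (f y) ≤ C * distT2 x y ^ a

/-- C⁰-rigidity: liminf_{n→∞} d_{C⁰}(fⁿ, Id) = 0. -/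
def C0Rigid (f : T2 → T2) : Prop :=
  ∀ ε : ℝ, 0 < ε → ∃ᶠ n : ℕ in atTop, dC0 (f^[n]) id < ε

/-- `f` is a C^r diffeomorphism of 𝕋², expressed via a C^r lift with a C^r inverse. -/
def IsCrDiffeo (r : ℕ∞) (f : T2 → T2) : Prop :=
  ∃ F G : R2 → R2, IsLift F f ∧ Function.LeftInverse G F ∧ Function.RightInverse G F ∧
    ContDiff ℝ r F ∧ ContDiff ℝ r G

/-- C^k-rigidity: some sequence of iterates f^{n_j}, n_j → ∞, converges to the identity in the
C^k topology, i.e. admits lifts converging to the identity uniformly together with all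
derivatives of order ≤ k. -/
def CkRigid (k : ℕ∞) (f : T2 → T2) : Prop :=
  ∃ n : ℕ → ℕ, Tendsto n atTop atTop ∧
    ∃ F : ℕ → R2 → R2, (∀ j, IsLift (F j) (f^[n j])) ∧
      ∀ i : ℕ, (i : ℕ∞) ≤ k →
        Tendsto (fun j => ⨆ z : R2, ‖iteratedFDeriv ℝ i (fun w => F j w - w) z‖)
          atTop (𝓝 0)

/-- ‖x‖_𝕋 : the distance from x ∈ ℝ to the nearest integer. -/
def dT (x : ℝ) : ℝ := |x - round x|

/-- `q` is the sequence of denominators of the best rational approximations of β. -/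
def BestDenomSeq (β : ℝ) (q : ℕ → ℕ) : Prop :=
  q 0 = 1 ∧ ∀ n : ℕ,
    q n < q (n + 1) ∧
    (∀ m : ℕ, 1 ≤ m → m < q (n + 1) → dT ((q n : ℝ) * β) ≤ dT ((m : ℝ) * β)) ∧
    dT ((q n : ℝ) * β) < 1 / (q (n + 1) : ℝ)

/-- β is of non-Brjuno type: Σ_n (ln q_{n+1})/q_n = ∞. -/
def NonBrjunoNum (β : ℝ) : Prop :=
  ∀ q : ℕ → ℕ, BestDenomSeq β q → ¬ Summable fun n => Real.log (q (n + 1) : ℝ) / (q n : ℝ)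

/-- Character data of a semi-irrational vector ω: (c,d) ∈ ℤ² with gcd(c,d)=1 and
e = p/q ∈ ℚ in lowest terms with q > 0 such that c ω₁ + d ω₂ + p/q = 0. -/
def IsCharData (ω : R2) (c d p q : ℤ) : Prop :=
  Int.gcd c d = 1 ∧ Int.gcd p q = 1 ∧ 0 < q ∧
    (c : ℝ) * ω.1 + (d : ℝ) * ω.2 + (p : ℝ) / (q : ℝ) = 0

/-- ω is of strong non-Brjuno type: its character frequency 𝓕(ω̄) is of non-Brjuno type. -/
def StrongNonBrjuno (ω : R2) : Prop :=
  ∃ c d p q a b : ℤ, IsCharData ω c d p q ∧ a * d - b * c = 1 ∧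
    NonBrjunoNum (dT ((q : ℝ) * ((a : ℝ) * ω.1 + (b : ℝ) * ω.2)))

/-- The linear action of the integer matrix [[a,b],[c,d]] on ℝ². -/
def AactZ (a b c d : ℤ) (z : R2) : R2 :=
  ((a : ℝ) * z.1 + (b : ℝ) * z.2, (c : ℝ) * z.1 + (d : ℝ) * z.2)

/-- The operator norm (w.r.t. the Euclidean norm) of the matrix [[a,b],[c,d]]. -/
def AOpNormZ (a b c d : ℤ) : ℝ :=
  sSup {r | ∃ u : R2, enorm2 u ≤ 1 ∧
    r = enorm2 ((a : ℝ) * u.1 + (b : ℝ) * u.2, (c : ℝ) * u.1 + (d : ℝ) * u.2)}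

/-- Membership in the class 𝒞_{κ,ω̄}: pseudo-rotations with rotation vector ω̄ mod ℤ²
having bounded mean motion with bound κ. -/
def MemC (κ : ℝ) (w : T2) (f : T2 → T2) : Prop :=
  IsotopicToId f ∧ ∃ (F : R2 → R2) (ω : R2),
    IsLift F f ∧ rotSet F = {ω} ∧ pr2 ω = w ∧ BoundedMeanMotion F ω κ

/-- Membership in the class 𝒟_{κ,ω̄,v}: pseudo-rotations with rotation vector ω̄ mod ℤ²
having bounded deviation parallel to v with bound κ. -/
def MemD (κ : ℝ) (w : T2) (v : R2) (f : T2 → T2) : Prop :=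
  IsotopicToId f ∧ ∃ (F : R2 → R2) (ω : R2),
    IsLift F f ∧ rotSet F = {ω} ∧ pr2 ω = w ∧ BoundedDeviation F ω v κ

/-- `h : 𝕋² → 𝕋²` is homotopic to the identity (characterised by admitting an equivariant
continuous lift). -/
def HomotopicToIdMap (h : T2 → T2) : Prop :=
  ∃ H : R2 → R2, Continuous H ∧ IsLift H h ∧ Equivariant H

/-- `f` is regularly semi-conjugate to the translation T_w : x ↦ x + w, i.e. semi-conjugate via
a continuous surjection homotopic to the identity. -/
def RegSemiConj (f : T2 → T2) (w : T2) : Prop :=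
  ∃ h : T2 → T2, Continuous h ∧ Function.Surjective h ∧ HomotopicToIdMap h ∧
    ∀ x : T2, h (f x) = h x + w

/-- `f` is topologically conjugate to a translation of 𝕋². -/
def TopLinearizable (f : T2 → T2) : Prop :=
  ∃ (w : T2) (h : T2 → T2), IsHomeomorph h ∧ ∀ x : T2, h (f x) = h x + w

/-- `f` is minimal: every orbit is dense. -/
def MinimalMap (f : T2 → T2) : Prop :=
  ∀ x : T2, Dense (Set.range fun n : ℕ => f^[n] x)

/-- The open ball in 𝕋² for the Euclidean-induced distance. -/
def ballT2 (z : T2) (r : ℝ) : Set T2 := {y | distT2 z y < r}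

/-- The diameter of a subset of 𝕋² for the Euclidean-induced distance. -/
def diamT2 (S : Set T2) : ℝ := sSup {r | ∃ x ∈ S, ∃ y ∈ S, r = distT2 x y}

/-- The Euclidean diameter of a subset of ℝ². -/
def diamE (S : Set R2) : ℝ := sSup {r | ∃ x ∈ S, ∃ y ∈ S, r = enorm2 (x - y)}

/-- `F` is a bounded (measurable) fundamental domain for the ℤ²-action on ℝ². -/
def IsBoundedFundDom (F : Set R2) : Prop :=
  MeasurableSet F ∧ Bornology.IsBounded F ∧
    (∀ x : R2, ∃ v : ℤ × ℤ, x - intVec v ∈ F) ∧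
    ∀ v : ℤ × ℤ, v ≠ 0 → F ∩ ((fun x => x + intVec v) '' F) = ∅

/-- `D` is an open topological disc in 𝕋². -/
def IsTopDisc (D : Set T2) : Prop :=
  IsOpen D ∧ Nonempty (D ≃ₜ Metric.ball (0 : R2) 1)

/-- `D` is simple with respect to the fundamental domain `F`: some connected component of
π⁻¹(D) is contained in `F`. -/
def IsSimpleDisc (D : Set T2) (F : Set R2) : Prop :=
  ∃ x ∈ pr2 ⁻¹' D, connectedComponentIn (pr2 ⁻¹' D) x ⊆ F

/-- `u` is the rotation vector of `g`, defined as the mean displacement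
∫_{𝕋²} (g̃(x̃) − x̃) dλ(x) mod ℤ² of an equivariant lift `G` of `g`. -/
def IsRotOf (g : T2 → T2) (u : T2) : Prop :=
  ∃ (G : R2 → R2) (Φ : T2 → R2), Continuous G ∧ IsLift G g ∧ Equivariant G ∧
    (∀ z : R2, Φ (pr2 z) = G z - z) ∧ u = pr2 (∫ x : T2, Φ x)

/-- The set Γ = ((ℚ×ℝ)/ℤ²) ∪ ((ℝ×ℚ)/ℤ²) of points of 𝕋² with at least one rational
coordinate. -/
def GammaSet : Set T2 :=
  {x | (∃ q : ℚ, x.1 = ((q : ℝ) : AddCircle (1 : ℝ))) ∨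
       (∃ q : ℚ, x.2 = ((q : ℝ) : AddCircle (1 : ℝ)))}


/- ### Part A -/

lemma int_valued_const {X : Type*} [TopologicalSpace X] {S : Set X} (hS : IsPreconnected S)
    {k : X → ℝ} (hk : ContinuousOn k S) (hi : ∀ x ∈ S, ∃ n : ℤ, k x = n) {x y : X}
    (hx : x ∈ S) (hy : y ∈ S) : k x = k y := by
  have hd : DiscreteTopology (Set.range (Int.cast : ℤ → ℝ)) :=
    (Int.isClosedEmbedding_coe_real.isEmbedding.toHomeomorph).symm.isEmbedding.discreteTopology
  refine hS.constant_of_mapsTo (T := Set.range (Int.cast : ℤ → ℝ)) ⟨hd⟩ hk ?_ hx hy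
  intro z hz
  obtain ⟨n, hn⟩ := hi z hz
  exact ⟨n, hn.symm⟩

lemma exp_one_const {X : Type*} [TopologicalSpace X] {S : Set X} (hS : IsPreconnected S)
    {k : X → ℂ} (hk : ContinuousOn k S) (hi : ∀ x ∈ S, Complex.exp (k x) = 1) {x y : X}
    (hx : x ∈ S) (hy : y ∈ S) : k x = k y := by
  have key : ∀ z ∈ S, ∃ n : ℤ, k z = n * (2 * Real.pi * Complex.I) := fun z hz =>
    Complex.exp_eq_one_iff.1 (hi z hz)
  have h1 := int_valued_const hS (k := fun z => (k z / (2 * Real.pi * Complex.I)).re)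
    (Complex.continuous_re.comp_continuousOn (hk.div_const _)) (by
      intro z hz
      obtain ⟨n, hn⟩ := key z hz
      refine ⟨n, ?_⟩
      rw [hn, mul_div_cancel_right₀ _ Complex.two_pi_I_ne_zero]
      simp) hx hy
  obtain ⟨n, hn⟩ := key x hx
  obtain ⟨m, hm⟩ := key y hy
  simp only [hn, hm, mul_div_cancel_right₀ _ Complex.two_pi_I_ne_zero] at h1
  rw [hn, hm]
  simp at h1
  rw [h1]

lemma exists_clog {X : Type*} [TopologicalSpace X] [SimplyConnectedSpace X]
    [LocallyPathConnectedSpace X] {g : X → ℂ} (hg : Continuous g) (h0 : ∀ x, g x ≠ 0) :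
    ∃ f : X → ℂ, Continuous f ∧ ∀ x, Complex.exp (f x) = g x := by
  obtain ⟨x₀⟩ : Nonempty X := inferInstance
  obtain ⟨F, ⟨-, hF⟩, -⟩ := Complex.isCoveringMapOn_exp.existsUnique_continuousMap_lifts
    (⟨g, hg⟩ : C(X, ℂ)) (a₀ := x₀) (Complex.exp_log (h0 x₀)) (fun x => by simpa using h0 x)
  exact ⟨F, F.continuous, fun x => congrFun hF x⟩

/-- A symmetric continuous logarithm of the difference quotient. -/
def HasLogC (h : ℂ → ℂ) : Prop :=
  ∃ a : ℂ → ℂ → ℂ, ContinuousOn (fun p : ℂ × ℂ => a p.1 p.2) {p | p.1 ≠ p.2} ∧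
    (∀ x y, x ≠ y → a x y = a y x) ∧
    ∀ x y, x ≠ y → h y - h x = Complex.exp (a x y) * (y - x)

lemma HasLogC.comp {h k : ℂ ≃ₜ ℂ} (hh : HasLogC h) (hk : HasLogC k) : HasLogC (k.trans h) := by
  obtain ⟨a, ha, hs, he⟩ := hh
  obtain ⟨b, hb, hs', he'⟩ := hk
  refine ⟨fun x y => a (k x) (k y) + b x y, ?_, ?_, ?_⟩
  · refine ContinuousOn.add ?_ hb
    refine ha.comp (f := fun p : ℂ × ℂ => (k p.1, k p.2)) (by fun_prop) ?_
    intro p hp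
    exact fun hc => hp (k.injective hc)
  · intro x y hxy
    simp only
    rw [hs _ _ (fun hc => hxy (k.injective hc)), hs' _ _ hxy]
  · intro x y hxy
    simp only [Homeomorph.trans_apply]
    rw [he _ _ (fun hc => hxy (k.injective hc)), he' _ _ hxy, Complex.exp_add]; ring

lemma HasLogC.symm {h : ℂ ≃ₜ ℂ} (hh : HasLogC h) : HasLogC h.symm := by
  obtain ⟨a, ha, hs, he⟩ := hh
  refine ⟨fun x y => - a (h.symm x) (h.symm y), ?_, ?_, ?_⟩
  · refine ContinuousOn.neg ?_
    refine ha.comp (f := fun p : ℂ × ℂ => (h.symm p.1, h.symm p.2)) (by fun_prop) ?_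
    intro p hp
    exact fun hc => hp (h.symm.injective hc)
  · intro x y hxy
    simp only
    rw [hs _ _ (fun hc => hxy (h.symm.injective hc))]
  · intro x y hxy
    have := he (h.symm x) (h.symm y) (fun hc => hxy (h.symm.injective hc))
    simp only [Homeomorph.apply_symm_apply] at this
    rw [this, Complex.exp_neg, inv_mul_cancel_left₀ (Complex.exp_ne_zero _)]

lemma hasLogC_refl : HasLogC (Homeomorph.refl ℂ) :=
  ⟨fun _ _ => 0, continuousOn_const, fun _ _ _ => rfl, fun x y _ => by simp⟩

lemma no_period_two {h : ℂ ≃ₜ ℂ} (hh : HasLogC h) (hf : ∀ z, h z ≠ z) (x : ℂ) :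
    h (h x) ≠ x := by
  intro hx
  obtain ⟨a, ha, hs, he⟩ := hh
  obtain ⟨Θ, hΘ, hΘe⟩ := exists_clog (g := fun z => h z - z) (by fun_prop)
    (fun z => sub_ne_zero.2 (hf z))
  have hc : Continuous fun z => a z (h z) := by
    rw [← continuousOn_univ]
    exact ha.comp (f := fun z : ℂ => (z, h z)) (by fun_prop) (fun z _ => (hf z).symm)
  have h1 := exp_one_const (S := Set.univ) isPreconnected_univ
    (k := fun z => Θ (h z) - Θ z - a z (h z))
    (((hΘ.comp h.continuous).sub hΘ).sub hc).continuousOn (by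
      intro z _
      have := he z (h z) (hf z).symm
      rw [Complex.exp_sub, Complex.exp_sub, hΘe, hΘe, this]
      have h2 := Complex.exp_ne_zero (a z (h z))
      have h3 := sub_ne_zero.2 (hf z)
      field_simp) (Set.mem_univ x) (Set.mem_univ (h x))
  have h0 : Complex.exp (Θ (h x) - Θ x - a x (h x)) = 1 := by
    have := he x (h x) (hf x).symm
    rw [Complex.exp_sub, Complex.exp_sub, hΘe, hΘe, this]
    have h2 := Complex.exp_ne_zero (a x (h x))
    have h3 := sub_ne_zero.2 (hf x)
    field_simp
  simp only [hx] at h1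
  rw [hs (h x) x (hf x)] at h1
  have h4 : Θ (h x) = Θ x := by linear_combination h1 / 2
  rw [h4, sub_self, zero_sub, Complex.exp_neg, inv_eq_one] at h0
  have h5 := he x (h x) (hf x).symm
  rw [h0, hx] at h5
  have h6 : h x = x := by linear_combination -h5 / 2
  exact hf x h6


lemma contraction_homeo {u : ℂ → ℂ} (hu : ∀ x y, ‖u x - u y‖ ≤ 1 / 2 * ‖x - y‖) :
    ∃ φ : ℂ ≃ₜ ℂ, HasLogC φ ∧ ∀ x, φ x = x + u x := by
  have hA : ApproximatesLinearOn (fun x => x + u x)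
      ((ContinuousLinearEquiv.refl ℂ ℂ : ℂ ≃L[ℂ] ℂ) : ℂ →L[ℂ] ℂ) Set.univ (1 / 2 : NNReal) := by
    intro x _ y _
    have := hu x y
    simpa [add_sub_add_comm] using this
  have hc : Subsingleton ℂ ∨ (1 / 2 : NNReal) <
      ‖((ContinuousLinearEquiv.refl ℂ ℂ).symm : ℂ →L[ℂ] ℂ)‖₊⁻¹ := by
    right
    have : ‖((ContinuousLinearEquiv.refl ℂ ℂ).symm : ℂ →L[ℂ] ℂ)‖₊ = 1 := by
      ext; simp
    rw [this, inv_one]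
    exact NNReal.half_lt_self one_ne_zero
  have huc : Continuous u := by
    refine (LipschitzWith.of_dist_le_mul (K := 1 / 2) ?_).continuous
    intro x y
    simpa [dist_eq_norm] using hu x y
  refine ⟨hA.toHomeomorph _ hc, ?_, fun x => rfl⟩
  have hlt : ∀ x y, x ≠ y → ‖(u y - u x) / (y - x)‖ < 1 := by
    intro x y hxy
    have h0 : 0 < ‖y - x‖ := norm_pos_iff.2 (sub_ne_zero.2 hxy.symm)
    rw [norm_div, div_lt_one h0]
    have := hu y x
    linarith
  refine ⟨fun x y => Complex.log (1 + (u y - u x) / (y - x)), ?_, ?_, ?_⟩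
  · refine ContinuousOn.clog ?_ ?_
    · refine continuousOn_const.add (ContinuousOn.div (by fun_prop) (by fun_prop) ?_)
      intro p hp
      exact sub_ne_zero.2 (Ne.symm hp)
    · intro p hp
      exact Complex.mem_slitPlane_of_norm_lt_one (hlt _ _ hp)
  · intro x y hxy
    simp only
    rw [← neg_sub (u x), ← neg_sub x, neg_div_neg_eq]
  · intro x y hxy
    have h1 : y - x ≠ 0 := sub_ne_zero.2 hxy.symm
    rw [Complex.exp_log (Complex.slitPlane_ne_zero
      (Complex.mem_slitPlane_of_norm_lt_one (hlt _ _ hxy)))]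
    change y + u y - (x + u x) = _
    field_simp
    ring

lemma push_local {U : Set ℂ} (hU : IsOpen U) {a : ℂ} (ha : a ∈ U) :
    ∀ᶠ b in 𝓝 a, ∃ φ : ℂ ≃ₜ ℂ, HasLogC φ ∧ φ a = b ∧ ∀ x ∉ U, φ x = x := by
  obtain ⟨ρ, hρ, hball⟩ := Metric.isOpen_iff.1 hU a ha
  filter_upwards [Metric.ball_mem_nhds a (half_pos hρ)] with b hb
  have hv : ‖b - a‖ < ρ / 2 := by simpa [dist_eq_norm] using hb
  obtain ⟨φ, hφ, he⟩ := contraction_homeo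
    (u := fun x => ((max 0 (1 - ‖x - a‖ / ρ) : ℝ) : ℂ) * (b - a)) (by
      intro x y
      rw [← sub_mul, ← Complex.ofReal_sub, norm_mul, Complex.norm_real, Real.norm_eq_abs]
      have h1 : |max 0 (1 - ‖x - a‖ / ρ) - max 0 (1 - ‖y - a‖ / ρ)| ≤ ‖x - y‖ / ρ := by
        have h2 := abs_max_sub_max_le_max 0 (1 - ‖x - a‖ / ρ) 0 (1 - ‖y - a‖ / ρ)
        refine h2.trans ?_
        rw [sub_self, abs_zero, max_eq_right (abs_nonneg _)]
        have h3 : 1 - ‖x - a‖ / ρ - (1 - ‖y - a‖ / ρ) = (‖y - a‖ - ‖x - a‖) / ρ := by ring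
        rw [h3, abs_div, abs_of_pos hρ]
        have h4 := abs_norm_sub_norm_le (y - a) (x - a)
        rw [sub_sub_sub_cancel_right, norm_sub_rev y x] at h4
        gcongr
      calc _ ≤ ‖x - y‖ / ρ * (ρ / 2) := by gcongr
        _ = _ := by field_simp)
  refine ⟨φ, hφ, ?_, ?_⟩
  · rw [he]; simp
  · intro x hx
    have h1 : ρ ≤ ‖x - a‖ := by
      by_contra hc
      exact hx (hball (by simpa [dist_eq_norm] using hc))
    rw [he]
    have : 1 - ‖x - a‖ / ρ ≤ 0 := by
      rw [sub_nonpos, one_le_div hρ]; exact h1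
    simp [max_eq_left this]

lemma push {U : Set ℂ} (hU : IsOpen U) (hUc : IsPreconnected U) {a b : ℂ} (ha : a ∈ U)
    (hb : b ∈ U) : ∃ φ : ℂ ≃ₜ ℂ, HasLogC φ ∧ φ a = b ∧ ∀ x ∉ U, φ x = x := by
  refine hUc.induction₂ (fun a b => ∃ φ : ℂ ≃ₜ ℂ, HasLogC φ ∧ φ a = b ∧ ∀ x ∉ U, φ x = x)
    ?_ ?_ ?_ ha hb
  · intro x hx
    exact nhdsWithin_le_nhds (push_local hU hx)
  · rintro x y z - - - ⟨φ, h1, h2, h3⟩ ⟨ψ, k1, k2, k3⟩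
    refine ⟨φ.trans ψ, k1.comp h1, by simp [h2, k2], fun t ht => by simp [h3 t ht, k3 t ht]⟩
  · rintro x y - - ⟨φ, h1, h2, h3⟩
    refine ⟨φ.symm, h1.symm, by simp [← h2], fun t ht => ?_⟩
    rw [Homeomorph.symm_apply_eq, h3 t ht]

lemma supp_mem {U : Set ℂ} {φ : ℂ ≃ₜ ℂ} (h : ∀ x ∉ U, φ x = x) {x : ℂ} (hx : x ∈ U) :
    φ x ∈ U := by
  by_contra hc
  have := φ.injective (h _ hc)
  exact hc (by rwa [this])

/-- Fixed point free homeomorphisms in the class. -/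
def FPF (h : ℂ ≃ₜ ℂ) : Prop := HasLogC h ∧ ∀ z, h z ≠ z

lemma FPF.push {h φ : ℂ ≃ₜ ℂ} (hh : FPF h) (hφ : HasLogC φ) {U : Set ℂ}
    (hU : ∀ x ∈ U, h x ∉ U) (hs : ∀ x ∉ U, φ x = x) : FPF (h.trans φ) := by
  refine ⟨hφ.comp hh.1, fun z hz => ?_⟩
  simp only [Homeomorph.trans_apply] at hz
  by_cases hc : h z ∈ U
  · have := supp_mem hs hc
    rw [hz] at this
    exact hU z this hc
  · rw [hs _ hc] at hz
    exact hh.2 z hz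

lemma iter_eq {h φ : ℂ → ℂ} {U : Set ℂ} (hs : ∀ x ∉ U, φ x = x) {u : ℂ} {j : ℕ}
    (hj : ∀ i, 1 ≤ i → i ≤ j → h^[i] u ∉ U) : ∀ i ≤ j, (φ ∘ h)^[i] u = h^[i] u := by
  intro i
  induction i with
  | zero => intro _; rfl
  | succ i ih =>
    intro hi
    rw [Function.iterate_succ_apply', ih (by omega), Function.comp_apply,
      ← Function.iterate_succ_apply' h, hs _ (hj _ (by omega) hi)]

lemma closing {h : ℂ ≃ₜ ℂ} (hh : FPF h) {U : Set ℂ} (hUo : IsOpen U) (hUc : IsPreconnected U)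
    (hU : ∀ x ∈ U, h x ∉ U) {u : ℂ} (hu : u ∈ U) {j : ℕ} (hj1 : 1 ≤ j)
    (hj : h^[j] u ∈ U) :
    ∃ i, 2 ≤ i ∧ i ≤ j ∧ ∃ h' : ℂ ≃ₜ ℂ, FPF h' ∧ ∃ x, h'^[i] x = x := by
  classical
  have hex : ∃ i, 1 ≤ i ∧ h^[i] u ∈ U := ⟨j, hj1, hj⟩
  obtain ⟨hi1, hi2⟩ := Nat.find_spec hex
  set i := Nat.find hex with hi
  have hmin : ∀ m, 1 ≤ m → m < i → h^[m] u ∉ U := fun m h1 h2 h3 =>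
    Nat.find_min hex h2 ⟨h1, h3⟩
  have h2i : 2 ≤ i := by
    by_contra hc
    have : i = 1 := by omega
    rw [this] at hi2
    exact hU u hu hi2
  obtain ⟨φ, hφ, hφu, hs⟩ := push hUo hUc hi2 hu
  refine ⟨i, h2i, Nat.find_min' hex ⟨hj1, hj⟩, h.trans φ, hh.push hφ hU hs, u, ?_⟩
  obtain ⟨m, hm⟩ : ∃ m, i = m + 1 := ⟨i - 1, by omega⟩
  have := iter_eq (h := h) (φ := φ) hs (u := u) (j := m)
    (fun k h1 h2 => hmin k h1 (by omega)) m le_rfl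
  change (φ ∘ h)^[i] u = u
  rw [hm, Function.iterate_succ_apply', this, Function.comp_apply,
    ← Function.iterate_succ_apply' h, Nat.succ_eq_add_one, ← hm, hφu]


lemma exists_max_ball (h : ℂ ≃ₜ ℂ) {x : ℂ} (hx : h x ≠ x) :
    ∃ r > 0, (∀ y ∈ Metric.ball x r, h y ∉ Metric.ball x r) ∧
      ∃ z, dist z x ≤ r ∧ dist (h z) x ≤ r := by
  obtain ⟨z, hz⟩ := Continuous.exists_forall_le
    (f := fun z => max (dist z x) (dist (h z) x)) (by fun_prop) (by
      refine tendsto_atTop_mono (fun z => le_max_left _ _) ?_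
      exact tendsto_dist_right_cocompact_atTop x)
  refine ⟨max (dist z x) (dist (h z) x), ?_, ?_, z, le_max_left _ _, le_max_right _ _⟩
  · by_contra hc
    have h1 : dist z x ≤ 0 := (le_max_left _ _).trans (not_lt.1 hc)
    have h2 : dist (h z) x ≤ 0 := (le_max_right _ _).trans (not_lt.1 hc)
    have h3 := dist_le_zero.1 h1
    have h4 := dist_le_zero.1 h2
    rw [h3] at h4
    exact hx h4
  · intro y hy hy'
    exact absurd (hz y) (not_le.2 (max_lt hy hy'))

lemma free_closure (k : ℂ ≃ₜ ℂ) {x : ℂ} {r : ℝ} (hr : 0 < r)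
    (hB : ∀ y ∈ Metric.ball x r, k y ∉ Metric.ball x r) :
    (∀ y, dist y x < r → ¬ dist (k y) x ≤ r) ∧ (∀ y, dist y x ≤ r → ¬ dist (k y) x < r) := by
  have hd : Disjoint (k '' Metric.ball x r) (Metric.ball x r) := by
    rw [Set.disjoint_left]
    rintro _ ⟨y, hy, rfl⟩
    exact hB y hy
  have ho : IsOpen (k '' Metric.ball x r) := k.isOpenMap _ Metric.isOpen_ball
  have h1 := hd.closure_right ho
  have h2 := hd.closure_left Metric.isOpen_ball
  rw [← k.image_closure] at h2
  rw [closure_ball _ hr.ne'] at h1 h2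
  rw [Set.disjoint_left] at h1 h2
  exact ⟨fun y hy hk => h1 ⟨y, hy, rfl⟩ hk, fun y hy hk => h2 ⟨y, hy, rfl⟩ hk⟩

lemma compact_nbhd (h : ℂ ≃ₜ ℂ) {β : Set ℂ} (hc : IsCompact β) (hp : IsPreconnected β)
    (hf : ∀ y ∈ β, h y ∉ β) {u : ℂ} (hu : u ∈ β) :
    ∃ U, IsOpen U ∧ IsPreconnected U ∧ (∀ y ∈ U, h y ∉ U) ∧ β ⊆ U := by
  have hd : Disjoint β (h '' β) := by
    rw [Set.disjoint_right]
    rintro _ ⟨y, hy, rfl⟩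
    exact hf y hy
  obtain ⟨W, W', hW, hW', h1, h2, h3⟩ :=
    SeparatedNhds.of_isCompact_isCompact hc (hc.image h.continuous) hd
  have hV : IsOpen (W ∩ h ⁻¹' W') := hW.inter (hW'.preimage h.continuous)
  have hsub : β ⊆ W ∩ h ⁻¹' W' := fun y hy => ⟨h1 hy, h2 ⟨y, hy, rfl⟩⟩
  refine ⟨connectedComponentIn (W ∩ h ⁻¹' W') u, hV.connectedComponentIn,
    isPreconnected_connectedComponentIn, ?_, hp.subset_connectedComponentIn hu hsub⟩
  intro y hy hy'
  have k1 := connectedComponentIn_subset _ _ hy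
  have k2 := connectedComponentIn_subset _ _ hy'
  exact Set.disjoint_left.1 h3 k2.1 k1.2

theorem no_periodic (k : ℕ) : 1 ≤ k → ∀ h : ℂ ≃ₜ ℂ, FPF h → ∀ x, h^[k] x ≠ x := by
  induction k using Nat.strong_induction_on with
  | _ k ih =>
  intro hk1 h hh x hx
  rcases Nat.lt_or_ge k 3 with hk | hk
  · interval_cases k
    · exact hh.2 x hx
    · exact no_period_two hh.1 hh.2 x hx
  have star : ∀ h : ℂ ≃ₜ ℂ, FPF h → ∀ U : Set ℂ, IsOpen U → IsPreconnected U →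
      (∀ y ∈ U, h y ∉ U) → ∀ u ∈ U, ∀ j, 1 ≤ j → j < k → h^[j] u ∉ U := by
    intro h hh U hUo hUc hU u hu j hj1 hjk hj
    obtain ⟨i, hi2, hij, h', hh', y, hy⟩ := closing hh hUo hUc hU hu hj1 hj
    exact ih i (by omega) (by omega) h' hh' y hy
  obtain ⟨r, hr, hB, z, hz, hhz⟩ := exists_max_ball h (hh.2 x)
  obtain ⟨F1, F2⟩ := free_closure h hr hB
  have hB2 : ∀ y ∈ Metric.ball x r, (h.trans h) y ∉ Metric.ball x r := fun y hy =>
    star h hh _ Metric.isOpen_ball (convex_ball x r).isPreconnected hB y hy 2 (by omega) (by omega)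
  obtain ⟨E1, E2⟩ := free_closure (h.trans h) hr hB2
  simp only [Homeomorph.trans_apply] at E1 E2
  have hzr : dist z x = r := le_antisymm hz (not_lt.1 fun hc => F1 z hc hhz)
  have hhzr : dist (h z) x = r := le_antisymm hhz (not_lt.1 fun hc => F2 z hz hc)
  have nseg : ∀ (t : ℝ) (w : ℂ), dist w x = r → 0 ≤ t → dist (x + t * (w - x)) x = t * r := by
    intro t w hw ht
    rw [dist_eq_norm, add_sub_cancel_left, norm_mul, Complex.norm_real, Real.norm_eq_abs,
      abs_of_nonneg ht, ← dist_eq_norm, hw]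
  -- choose p
  obtain ⟨s, hs0, hs1, hps⟩ : ∃ s : ℝ, 0 < s ∧ s < 1 ∧
      h^[k] (x + s * (z - x)) ∈ Metric.ball x r := by
    have hcont : Continuous fun s : ℝ => h^[k] (x + s * (z - x)) :=
      (h.continuous.iterate k).comp (by fun_prop)
    have h0 : ∀ᶠ s : ℝ in 𝓝 0, h^[k] (x + s * (z - x)) ∈ Metric.ball x r := by
      refine hcont.continuousAt.eventually_mem (Metric.isOpen_ball.mem_nhds ?_)
      simp [hx, hr]
    have h1 : ∀ᶠ s : ℝ in 𝓝[>] 0, h^[k] (x + s * (z - x)) ∈ Metric.ball x r :=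
      nhdsWithin_le_nhds h0
    have h2 : ∀ᶠ s : ℝ in 𝓝[>] 0, s ∈ Set.Ioo (0 : ℝ) 1 := Ioo_mem_nhdsGT one_pos
    obtain ⟨s, k1, k2⟩ := (h1.and h2).exists
    exact ⟨s, k2.1, k2.2, k1⟩
  set p : ℂ := x + s * (z - x) with hp
  have hpB : p ∈ Metric.ball x r := by
    rw [Metric.mem_ball, hp, nseg s z hzr hs0.le]
    nlinarith
  set A1 : Set ℂ := (fun t : ℝ => x + t * (h z - x)) '' Set.Icc 0 1 with hA1
  set A2 : Set ℂ := (fun t : ℝ => x + t * (z - x)) '' Set.Icc s 1 with hA2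
  have hA1c : ∀ y ∈ A1, dist y x ≤ r := by
    rintro _ ⟨t, ht, rfl⟩
    simp only
    rw [nseg t _ hhzr ht.1]
    nlinarith [ht.2]
  have hA2c : ∀ y ∈ A2, dist y x ≤ r := by
    rintro _ ⟨t, ht, rfl⟩
    simp only
    rw [nseg t _ hzr (hs0.le.trans ht.1)]
    nlinarith [ht.2]
  have hA1l : ∀ y ∈ A1, y = h z ∨ dist y x < r := by
    rintro _ ⟨t, ht, rfl⟩
    rcases ht.2.eq_or_lt with h1 | h1
    · left; simp [h1]
    · right
      simp only
      rw [nseg t _ hhzr ht.1]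
      nlinarith
  have hA2l : ∀ y ∈ A2, y = z ∨ dist y x < r := by
    rintro _ ⟨t, ht, rfl⟩
    rcases ht.2.eq_or_lt with h1 | h1
    · left; simp [h1]
    · right
      simp only
      rw [nseg t _ hzr (hs0.le.trans ht.1)]
      nlinarith
  have hA12 : ∀ y ∈ A1, y ∉ A2 := by
    rintro _ ⟨t, ht, rfl⟩ ⟨t', ht', he⟩
    simp only at he
    have ht'0 : 0 < t' := hs0.trans_le ht'.1
    have h1 := congrArg (fun w => dist w x) he
    simp only [nseg t _ hhzr ht.1, nseg t' _ hzr ht'0.le] at h1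
    have h2 : t' = t := mul_right_cancel₀ hr.ne' h1
    subst h2
    have h3 : (t' : ℂ) ≠ 0 := by exact_mod_cast ht'0.ne'
    have h4 : z - x = h z - x := mul_left_cancel₀ h3 (add_left_cancel he)
    exact hh.2 z (sub_left_injective h4).symm
  have hhzA1 : h z ∈ A1 := ⟨1, by simp, by simp⟩
  have hzA2 : z ∈ A2 := ⟨1, ⟨hs1.le, le_rfl⟩, by simp⟩
  have hpA2 : p ∈ A2 := ⟨s, ⟨le_rfl, hs1.le⟩, rfl⟩
  have hxA1 : x ∈ A1 := ⟨0, by simp, by simp⟩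
  have hhhz : h (h z) ∉ A1 := by
    intro hc
    rcases hA1l _ hc with h1 | h1
    · exact hh.2 _ h1
    · exact E2 z hz h1
  set β : Set ℂ := A1 ∪ h '' A2 with hβ
  have hβc : IsCompact β := by
    refine (isCompact_Icc.image (by fun_prop)).union ?_
    exact (isCompact_Icc.image (by fun_prop)).image h.continuous
  have hβp : IsPreconnected β := by
    refine IsPreconnected.union (h z) hhzA1 ⟨z, hzA2, rfl⟩ ?_ ?_
    · exact isPreconnected_Icc.image _ (Continuous.continuousOn (by fun_prop))
    · exact (isPreconnected_Icc.image _ (Continuous.continuousOn (by fun_prop))).image _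
        h.continuous.continuousOn
  have hβf : ∀ y ∈ β, h y ∉ β := by
    rintro y (hy | ⟨q, hq, rfl⟩)
    · rintro (hy' | ⟨q', hq', he⟩)
      · rcases hA1l y hy with rfl | h1
        · exact hhhz hy'
        · exact F1 y h1 (hA1c _ hy')
      · rw [h.injective he] at hq'
        exact hA12 y hy hq'
    · rintro (hy' | ⟨q', hq', he⟩)
      · rcases hA2l q hq with rfl | h1
        · exact hhhz hy'
        · exact E1 q h1 (hA1c _ hy')
      · rw [h.injective he] at hq'
        rcases hA2l q hq with rfl | h1
        · exact hA12 _ hhzA1 hq'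
        · exact F1 q h1 (hA2c _ hq')
  have hβB : ∀ y ∈ β, h y ∉ Metric.ball x r := by
    rintro y (hy | ⟨q, hq, rfl⟩)
    · exact F2 y (hA1c y hy)
    · exact E2 q (hA2c q hq)
  obtain ⟨ψ, hψ, hψx, hψs⟩ := push Metric.isOpen_ball (convex_ball x r).isPreconnected hps
    (Metric.mem_ball_self hr)
  have hh' : FPF (h.trans ψ) := hh.push hψ hB hψs
  have hβf' : ∀ y ∈ β, (h.trans ψ) y ∉ β := by
    intro y hy
    rw [Homeomorph.trans_apply, hψs _ (hβB y hy)]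
    exact hβf y hy
  have hpβ : h p ∈ β := Or.inr ⟨p, hpA2, rfl⟩
  obtain ⟨U, hUo, hUc, hUf, hUβ⟩ := compact_nbhd (h.trans ψ) hβc hβp hβf' hpβ
  refine star _ hh' U hUo hUc hUf (h p) (hUβ hpβ) (k - 1) (by omega) (by omega) ?_
  obtain ⟨m, hm⟩ : ∃ m, k = m + 2 := ⟨k - 2, by omega⟩
  have hit := iter_eq (h := h) (φ := ψ) hψs (u := h p) (j := m) (by
    intro i h1 h2
    rw [← Function.iterate_succ_apply]
    exact star h hh _ Metric.isOpen_ball (convex_ball x r).isPreconnected hB p hpB _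
      (by omega) (by omega)) m le_rfl
  have hfin : (h.trans ψ)^[k - 1] (h p) = x := by
    change (ψ ∘ h)^[k - 1] (h p) = x
    have : k - 1 = m + 1 := by omega
    rw [this, Function.iterate_succ_apply', hit, Function.comp_apply,
      ← Function.iterate_succ_apply, ← Function.iterate_succ_apply' h]
    rw [← hψx, hm]
  rw [hfin]
  exact hUβ (Or.inl hxA1)

theorem brouwer_free {h : ℂ ≃ₜ ℂ} (hh : FPF h) {U : Set ℂ} (hUo : IsOpen U)
    (hUc : IsPreconnected U) (hU : ∀ x ∈ U, h x ∉ U) {u : ℂ} (hu : u ∈ U) {j : ℕ}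
    (hj1 : 1 ≤ j) : h^[j] u ∉ U := by
  intro hj
  obtain ⟨i, h2, -, h', hh', x, hx⟩ := closing hh hUo hUc hU hu hj1 hj
  exact no_periodic i (by omega) h' hh' x hx


lemma hasLogC_of_bounded {Q : ℂ → ℂ} (hQ : Continuous Q) (hi : Function.Injective Q) {K : ℝ}
    (hK : ∀ z, ‖Q z - z‖ ≤ K) : HasLogC Q := by
  have hne : ∀ x s : ℂ, Q (x + Complex.exp s) - Q x ≠ 0 := by
    intro x s hc
    have := hi (sub_eq_zero.1 hc)
    exact Complex.exp_ne_zero s (by simpa using this)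
  set m : ℂ × ℂ → ℂ := fun p => (Q (p.1 + Complex.exp p.2) - Q p.1) / Complex.exp p.2 with hm
  have hmc : Continuous m := by
    refine Continuous.div (by fun_prop) (by fun_prop) (fun p => Complex.exp_ne_zero _)
  have hm0 : ∀ p, m p ≠ 0 := fun p => div_ne_zero (hne _ _) (Complex.exp_ne_zero _)
  obtain ⟨l, hlc, hl⟩ := exists_clog hmc hm0
  have hK0 : 0 ≤ K := (norm_nonneg _).trans (hK 0)
  -- periodicity
  have hper0 : ∀ x s : ℂ, l (x, s + 2 * Real.pi * Complex.I) = l (x, s) := by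
    have hmper : ∀ x s : ℂ, m (x, s + 2 * Real.pi * Complex.I) = m (x, s) := by
      intro x s
      simp only [hm, Complex.exp_periodic s]
    have hconst := fun p q : ℂ × ℂ => exp_one_const (S := Set.univ) isPreconnected_univ
      (k := fun p : ℂ × ℂ => l (p.1, p.2 + 2 * Real.pi * Complex.I) - l p)
      (Continuous.continuousOn ((hlc.comp (by fun_prop)).sub hlc)) (by
        intro p _
        rw [Complex.exp_sub, hl, hl, hmper, div_self (hm0 _)]) (Set.mem_univ p) (Set.mem_univ q)
    set R : ℝ := 2 * K with hR
    set S : Set (ℂ × ℂ) := {p | R < p.2.re} with hS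
    have hSp : IsPreconnected S := by
      have : Convex ℝ S := by
        have h1 : S = (fun p : ℂ × ℂ => p.2.re) ⁻¹' (Set.Ioi R) := rfl
        rw [h1]
        refine (convex_Ioi R).is_linear_preimage ?_
        constructor <;> intros <;> simp
      exact this.isPreconnected
    have hslit : ∀ p ∈ S, m p ∈ Complex.slitPlane := by
      intro p hp
      have h1 : m p = 1 + ((Q (p.1 + Complex.exp p.2) - (p.1 + Complex.exp p.2)) -
          (Q p.1 - p.1)) / Complex.exp p.2 := by
        simp only [hm]
        have := Complex.exp_ne_zero p.2
        field_simp
        ring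
      rw [h1]
      refine Complex.mem_slitPlane_of_norm_lt_one ?_
      rw [norm_div, div_lt_one (norm_pos_iff.2 (Complex.exp_ne_zero _)), Complex.norm_exp]
      have h2 := norm_sub_le (Q (p.1 + Complex.exp p.2) - (p.1 + Complex.exp p.2)) (Q p.1 - p.1)
      have h3 := hK p.1
      have h4 := hK (p.1 + Complex.exp p.2)
      have h5 := Real.add_one_le_exp p.2.re
      have h6 : 2 * K < p.2.re := hp
      linarith
    have hconst2 := fun (p q : ℂ × ℂ) (hp : p ∈ S) (hq : q ∈ S) => exp_one_const hSp
      (k := fun p : ℂ × ℂ => l p - Complex.log (m p))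
      (hlc.continuousOn.sub (hmc.continuousOn.clog hslit)) (by
        intro p _
        rw [Complex.exp_sub, hl, Complex.exp_log (hm0 _), div_self (hm0 _)]) hp hq
    have hp1 : ((0, (R + 1 : ℝ)) : ℂ × ℂ) ∈ S := by
      simp only [hS, Set.mem_ofPred_eq, Complex.ofReal_re]; linarith
    have hp2 : ((0, (R + 1 : ℝ) + 2 * Real.pi * Complex.I) : ℂ × ℂ) ∈ S := by
      simp [hS]
    have h7 := hconst2 _ _ hp1 hp2
    simp only [hmper] at h7
    intro x s
    have h8 := hconst (x, s) (0, (R + 1 : ℝ))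
    simp only at h8
    linear_combination h8 - h7
  have hper : ∀ x s s' : ℂ, Complex.exp s = Complex.exp s' → l (x, s) = l (x, s') := by
    intro x s s' he
    obtain ⟨n, hn⟩ := Complex.exp_eq_exp_iff_exists_int.1 he
    have hP : Function.Periodic (fun s => l (x, s)) (2 * Real.pi * Complex.I) := hper0 x
    rw [hn]
    exact (hP.int_mul n) s'
  have hsym : ∀ x s : ℂ, l (x, s) = l (x + Complex.exp s, s + Real.pi * Complex.I) := by
    have hexp : ∀ s : ℂ, Complex.exp (s + Real.pi * Complex.I) = - Complex.exp s := by
      intro s; rw [Complex.exp_add, Complex.exp_pi_mul_I]; ring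
    intro x s
    have hconst := fun p q : ℂ × ℂ => exp_one_const (S := Set.univ) isPreconnected_univ
      (k := fun p : ℂ × ℂ => l p - l (p.1 + Complex.exp p.2, p.2 + Real.pi * Complex.I))
      (Continuous.continuousOn (hlc.sub (hlc.comp (by fun_prop)))) (by
        intro p _
        have : m (p.1 + Complex.exp p.2, p.2 + Real.pi * Complex.I) = m p := by
          simp only [hm, hexp]
          rw [add_neg_cancel_right, ← neg_sub, neg_div_neg_eq]
        rw [Complex.exp_sub, hl, hl, this, div_self (hm0 _)]) (Set.mem_univ p) (Set.mem_univ q)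
    have h1 := hconst (x, s) (x + Complex.exp s, s + Real.pi * Complex.I)
    simp only [hexp, add_neg_cancel_right] at h1
    have h2 : l (x, s + Real.pi * Complex.I + Real.pi * Complex.I) = l (x, s) := by
      apply hper
      rw [hexp, hexp, neg_neg]
    rw [h2] at h1
    linear_combination h1 / 2
  refine ⟨fun x y => l (x, Complex.log (y - x)), ?_, ?_, ?_⟩
  · intro p hp
    have hp' : p.2 - p.1 ≠ 0 := sub_ne_zero.2 (Ne.symm hp)
    refine ContinuousAt.continuousWithinAt ?_
    by_cases hs : p.2 - p.1 ∈ Complex.slitPlane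
    · have : ContinuousAt (fun q : ℂ × ℂ => (q.1, Complex.log (q.2 - q.1))) p :=
        continuousAt_fst.prodMk (ContinuousAt.clog (by fun_prop) hs)
      exact ContinuousAt.comp (g := l) hlc.continuousAt this
    · have hs' : -(p.2 - p.1) ∈ Complex.slitPlane := by
        have := Complex.mem_slitPlane_or_neg_mem_slitPlane hp'
        exact this.resolve_left hs
      have h1 : ContinuousAt (fun q : ℂ × ℂ =>
          (q.1, Complex.log (-(q.2 - q.1)) + Real.pi * Complex.I)) p :=
        continuousAt_fst.prodMk (ContinuousAt.add
          (ContinuousAt.clog (f := fun q : ℂ × ℂ => -(q.2 - q.1)) (by fun_prop) hs')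
          continuousAt_const)
      have h2 := ContinuousAt.comp (g := l) hlc.continuousAt h1
      refine h2.congr ?_
      have h3 : ∀ᶠ q : ℂ × ℂ in 𝓝 p, q.2 - q.1 ≠ 0 :=
        ContinuousAt.eventually_ne (by fun_prop) hp'
      filter_upwards [h3] with q hq
      apply hper
      rw [Complex.exp_add, Complex.exp_pi_mul_I, Complex.exp_log hq,
        Complex.exp_log (neg_ne_zero.2 hq)]
      ring
  · intro x y hxy
    have h0 : y - x ≠ 0 := sub_ne_zero.2 hxy.symm
    have h0' : x - y ≠ 0 := sub_ne_zero.2 hxy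
    simp only
    rw [hsym, Complex.exp_log h0, add_sub_cancel]
    apply hper
    rw [Complex.exp_add, Complex.exp_pi_mul_I, Complex.exp_log h0, Complex.exp_log h0']
    ring
  · intro x y hxy
    have h0 : y - x ≠ 0 := sub_ne_zero.2 hxy.symm
    simp only
    rw [hl]
    simp only [hm]
    rw [Complex.exp_log h0, add_sub_cancel]
    field_simp

lemma brouwer_plane (Q : (ℝ × ℝ) ≃ₜ (ℝ × ℝ)) {K : ℝ} (hK : ∀ z, ‖Q z - z‖ ≤ K)
    (hf : ∀ z, Q z ≠ z) {U : Set (ℝ × ℝ)} (hUo : IsOpen U) (hUc : IsPreconnected U)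
    (hU : ∀ x ∈ U, Q x ∉ U) {u : ℝ × ℝ} (hu : u ∈ U) {j : ℕ} (hj1 : 1 ≤ j) :
    Q^[j] u ∉ U := by
  set e : (ℝ × ℝ) ≃L[ℝ] ℂ := Complex.equivRealProdCLM.symm with he
  set h : ℂ ≃ₜ ℂ := e.symm.toHomeomorph.trans (Q.trans e.toHomeomorph) with hh
  have happ : ∀ z, h z = e (Q (e.symm z)) := fun z => rfl
  have hFP : FPF h := by
    refine ⟨?_, ?_⟩
    · refine hasLogC_of_bounded h.continuous h.injective
        (K := ‖(e : (ℝ × ℝ) →L[ℝ] ℂ)‖ * K) ?_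
      intro z
      have h1 : h z - z = (e : (ℝ × ℝ) →L[ℝ] ℂ) (Q (e.symm z) - e.symm z) := by
        rw [happ, map_sub]; simp
      rw [h1]
      refine (ContinuousLinearMap.le_opNorm _ _).trans ?_
      gcongr
      exact hK _
    · intro z hz
      rw [happ] at hz
      refine hf (e.symm z) ?_
      have := congrArg e.symm hz
      simpa using this
  have hmem : ∀ z, z ∈ e.symm ⁻¹' U ↔ e.symm z ∈ U := fun z => Iff.rfl
  have hit : ∀ n, h^[n] (e u) = e (Q^[n] u) := by
    intro n
    induction n with
    | zero => rfl
    | succ n ih => rw [Function.iterate_succ_apply', ih, happ, Function.iterate_succ_apply']; simp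
  have := brouwer_free hFP (U := e.symm ⁻¹' U) (hUo.preimage e.symm.continuous) (by
      have h1 : e.symm ⁻¹' U = e '' U := by
        ext z; constructor
        · intro hz; exact ⟨_, hz, by simp⟩
        · rintro ⟨y, hy, rfl⟩; simpa using hy
      rw [h1]
      exact hUc.image _ e.continuous.continuousOn) (by
      intro x hx hx'
      rw [hmem, happ] at hx'
      simp only [ContinuousLinearEquiv.symm_apply_apply] at hx'
      exact hU _ hx hx') (u := e u) (by simpa using hu) hj1
  intro hc
  apply this
  rw [hmem, hit]
  simpa using hc


lemma pr2_continuous : Continuous pr2 := by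
  unfold pr2
  exact ((AddCircle.continuous_mk' 1).comp continuous_fst).prodMk
    ((AddCircle.continuous_mk' 1).comp continuous_snd)

lemma pr2_isOpenMap : IsOpenMap pr2 :=
  IsOpenMap.prodMap (f := fun x : ℝ => (x : AddCircle (1:ℝ)))
    (g := fun x : ℝ => (x : AddCircle (1:ℝ)))
    QuotientAddGroup.isOpenMap_coe QuotientAddGroup.isOpenMap_coe

lemma pr2_surjective : Function.Surjective pr2 := by
  rintro ⟨a, b⟩
  obtain ⟨a, rfl⟩ := QuotientAddGroup.mk_surjective a
  obtain ⟨b, rfl⟩ := QuotientAddGroup.mk_surjective b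
  exact ⟨(a, b), rfl⟩

lemma pr2_isQuotientMap : IsQuotientMap pr2 :=
  pr2_isOpenMap.isQuotientMap pr2_continuous pr2_surjective

lemma pr2_add (a b : R2) : pr2 (a + b) = pr2 a + pr2 b := rfl
lemma pr2_sub (a b : R2) : pr2 (a - b) = pr2 a - pr2 b := rfl

lemma pr2_eq_zero {a : R2} : pr2 a = 0 ↔ ∃ v, a = intVec v := by
  constructor
  · intro h
    have h1 : (a.1 : AddCircle (1:ℝ)) = 0 := congrArg Prod.fst h
    have h2 : (a.2 : AddCircle (1:ℝ)) = 0 := congrArg Prod.snd h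
    rw [AddCircle.coe_eq_zero_iff] at h1 h2
    obtain ⟨n, hn⟩ := h1
    obtain ⟨m, hm⟩ := h2
    refine ⟨(n, m), ?_⟩
    ext <;> simp [intVec, ← hn, ← hm]
  · rintro ⟨v, rfl⟩
    have h : ∀ n : ℤ, ((n : ℝ) : AddCircle (1:ℝ)) = 0 := fun n =>
      AddCircle.coe_eq_zero_iff 1 |>.2 ⟨n, by simp⟩
    exact Prod.ext (h _) (h _)

lemma pr2_intVec (v : ℤ × ℤ) : pr2 (intVec v) = 0 := pr2_eq_zero.2 ⟨v, rfl⟩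

lemma pr2_eq_iff {a b : R2} : pr2 a = pr2 b ↔ ∃ v, a = b + intVec v := by
  rw [← sub_eq_zero, ← pr2_sub, pr2_eq_zero]
  constructor
  · rintro ⟨v, hv⟩; exact ⟨v, by rw [← hv]; abel⟩
  · rintro ⟨v, rfl⟩; exact ⟨v, by abel⟩

lemma intVec_add (v w : ℤ × ℤ) : intVec (v + w) = intVec v + intVec w := by
  ext <;> simp [intVec]
lemma intVec_neg (v : ℤ × ℤ) : intVec (-v) = -intVec v := by
  ext <;> simp [intVec]
lemma intVec_zero : intVec 0 = 0 := by
  ext <;> simp [intVec]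

/-- A continuous planar map with constant projection is constant. -/
lemma lift_const {k : R2 → R2} (hk : Continuous k) {c : T2} (h : ∀ z, pr2 (k z) = c) :
    ∀ z, k z = k 0 := by
  have h1 : ∀ z, ∃ v, k z = k 0 + intVec v := fun z => pr2_eq_iff.1 ((h z).trans (h 0).symm)
  intro z
  have e1 := int_valued_const (S := (Set.univ : Set R2)) isPreconnected_univ
    (k := fun z => (k z).1 - (k 0).1) (by fun_prop) (by
      intro x _
      obtain ⟨v, hv⟩ := h1 x
      exact ⟨v.1, by simp [hv, intVec]⟩) (Set.mem_univ z) (Set.mem_univ 0)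
  have e2 := int_valued_const (S := (Set.univ : Set R2)) isPreconnected_univ
    (k := fun z => (k z).2 - (k 0).2) (by fun_prop) (by
      intro x _
      obtain ⟨v, hv⟩ := h1 x
      exact ⟨v.2, by simp [hv, intVec]⟩) (Set.mem_univ z) (Set.mem_univ 0)
  ext
  · simpa [sub_eq_zero] using e1
  · simpa [sub_eq_zero] using e2

lemma descend {E : Type*} [TopologicalSpace E] {k : R2 → E} (hk : Continuous k)
    (hp : ∀ z v, k (z + intVec v) = k z) :
    ∃ Φ : T2 → E, Continuous Φ ∧ ∀ z, Φ (pr2 z) = k z := by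
  have key : ∀ z, k (Function.surjInv pr2_surjective (pr2 z)) = k z := by
    intro z
    obtain ⟨v, hv⟩ := pr2_eq_iff.1 (Function.surjInv_eq pr2_surjective (pr2 z))
    rw [hv, hp]
  refine ⟨fun x => k (Function.surjInv pr2_surjective x), ?_, key⟩
  rw [pr2_isQuotientMap.continuous_iff]
  exact hk.congr fun z => (key z).symm

lemma descend_cont {E : Type*} [TopologicalSpace E] {k : R2 → E} (hk : Continuous k)
    {Φ : T2 → E} (h : ∀ z, Φ (pr2 z) = k z) : Continuous Φ := by
  rw [pr2_isQuotientMap.continuous_iff]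
  exact hk.congr fun z => (h z).symm

lemma periodic_bdd {E : Type*} [NormedAddCommGroup E] {k : R2 → E} (hk : Continuous k)
    (hp : ∀ z v, k (z + intVec v) = k z) : ∃ K, 0 ≤ K ∧ ∀ z, ‖k z‖ ≤ K := by
  obtain ⟨Φ, hΦ, h⟩ := descend hk hp
  obtain ⟨K, hK⟩ := isCompact_univ.exists_bound_of_continuousOn hΦ.continuousOn
  exact ⟨K, (norm_nonneg _).trans (hK 0 trivial), fun z => by rw [← h]; exact hK _ trivial⟩

lemma equiv_bdd {G : R2 → R2} (hc : Continuous G) (he : Equivariant G) :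
    ∃ K, 0 ≤ K ∧ ∀ z, ‖G z - z‖ ≤ K :=
  periodic_bdd (k := fun z => G z - z) (by fun_prop) (by intro z v; rw [he]; abel)

instance probT2 : IsProbabilityMeasure (volume : Measure T2) := by
  have : IsProbabilityMeasure (volume : Measure (AddCircle (1:ℝ))) := ⟨by simp⟩
  rw [Measure.volume_eq_prod]
  infer_instance

lemma integrable_cont {Φ : T2 → R2} (h : Continuous Φ) : Integrable Φ (volume : Measure T2) := by
  rw [← integrableOn_univ]
  exact h.continuousOn.integrableOn_compact isCompact_univ

lemma integral_comp_mp {g : T2 → T2} (hg : MeasurePreserving g (volume : Measure T2) volume)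
    {Φ : T2 → R2} (h : Continuous Φ) : ∫ x, Φ (g x) = ∫ x, Φ x := by
  rw [← integral_map (φ := g) (f := Φ) hg.measurable.aemeasurable
    (by rw [hg.map_eq]; exact (integrable_cont h).aestronglyMeasurable), hg.map_eq]

/-- The mean displacement of a map which descends to a translation through `h`. -/
lemma rot_eq {g h : T2 → T2} {G H : R2 → R2} {Φ : T2 → R2} {d : T2}
    (hmp : MeasurePreserving g (volume : Measure T2) volume)
    (hgc : Continuous g)
    (hG : Continuous G) (hGl : IsLift G g)
    (hH : Continuous H) (hHl : IsLift H h) (hHe : Equivariant H)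
    (hd : ∀ x, h (g x) = h x + d) (hΦ : ∀ z, Φ (pr2 z) = G z - z) :
    (∀ z, H (G z) = H z + ∫ x, Φ x) ∧ pr2 (∫ x, Φ x) = d := by
  have h1 : ∀ z, pr2 (H (G z) - H z) = d := by
    intro z
    rw [pr2_sub, hHl, hHl, hGl, hd]; abel
  have h2 := lift_const (k := fun z => H (G z) - H z) (by fun_prop) h1
  set c := H (G 0) - H 0 with hc
  obtain ⟨ψ, hψ, hψ'⟩ := descend (k := fun z => H z - z) (by fun_prop)
    (by intro z v; rw [hHe]; abel)
  have h3 : ∀ x, Φ x = c + (ψ x - ψ (g x)) := by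
    intro x
    obtain ⟨z, rfl⟩ := pr2_surjective x
    rw [hΦ, ← hGl, hψ', hψ', ← h2 z]; abel
  have h4 : ∫ x, Φ x = c := by
    simp_rw [h3]
    have i1 := integrable_cont hψ
    have i2 : Integrable (fun x => ψ (g x)) (volume : Measure T2) :=
      integrable_cont (hψ.comp hgc)
    have i3 : Integrable (fun x => ψ x - ψ (g x)) (volume : Measure T2) := i1.sub i2
    rw [integral_add (integrable_const _) i3, integral_sub i1 i2, integral_comp_mp hmp hψ]
    simp
  rw [h4]
  refine ⟨fun z => ?_, h1 0⟩
  rw [← h2 z]; abel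


lemma lip_of_c1 {G : R2 → R2} (h1 : ContDiff ℝ 1 G) (he : Equivariant G) :
    ∃ K, 1 ≤ K ∧ ∀ x y, ‖G x - G y‖ ≤ K * ‖x - y‖ := by
  obtain ⟨K, hK0, hK⟩ := periodic_bdd (k := fderiv ℝ G) (h1.continuous_fderiv one_ne_zero) (by
    intro z v
    have e1 : (fun x => G (x + intVec v)) = fun x => G x + intVec v := funext fun x => he x v
    have e2 := fderiv_comp_add_right (𝕜 := ℝ) (f := G) (x := z) (intVec v)
    rw [← e2, e1, fderiv_add_const])
  refine ⟨max K 1, le_max_right _ _, fun x y => ?_⟩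
  have := Convex.norm_image_sub_le_of_norm_fderiv_le (𝕜 := ℝ) (f := G) (s := Set.univ) (C := K)
    (fun x _ => (h1.differentiable one_ne_zero) x) (fun x _ => hK x) convex_univ
    (Set.mem_univ y) (Set.mem_univ x)
  exact this.trans (by gcongr; exact le_max_left _ _)

lemma lift_pack {s : ℕ∞} (hs : 1 ≤ s) {g : T2 → T2} (hg : IsCrDiffeo s g) {G : R2 → R2}
    (hc : Continuous G) (hl : IsLift G g) (he : Equivariant G) :
    ∃ Ge : R2 ≃ₜ R2, ⇑Ge = G ∧ Equivariant Ge.symm ∧ ∃ K, 1 ≤ K ∧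
      (∀ x y, ‖Ge x - Ge y‖ ≤ K * ‖x - y‖) ∧
      (∀ x y, ‖Ge.symm x - Ge.symm y‖ ≤ K * ‖x - y‖) := by
  obtain ⟨F, F', hF, hl1, hr1, hcF, hcF'⟩ := hg
  have h1 := lift_const (k := fun z => G z - F z) (hc.sub hcF.continuous) (c := 0)
    (fun z => by rw [pr2_sub, hl, hF, sub_self])
  set a := G 0 - F 0 with ha
  have hGF : ∀ z, G z = F z + a := fun z => by rw [← h1 z]; abel
  have hs' : (1 : WithTop ℕ∞) ≤ (s : WithTop ℕ∞) := by exact_mod_cast hs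
  let Ge : R2 ≃ₜ R2 :=
    { toFun := G
      invFun := fun z => F' (z - a)
      left_inv := fun z => by simp only [hGF, add_sub_cancel_right]; exact hl1 z
      right_inv := fun z => by simp only [hGF]; rw [hr1]; abel
      continuous_toFun := hc
      continuous_invFun := by
        have := hcF'.continuous
        fun_prop }
  have hGe : ⇑Ge = G := rfl
  have hsy : Equivariant Ge.symm := by
    intro z v
    apply Ge.injective
    rw [Ge.apply_symm_apply, hGe, he, ← hGe, Ge.apply_symm_apply]
  obtain ⟨K1, hK1, hk1⟩ := lip_of_c1 (G := G) (by
    rw [show G = fun z => F z + a from funext hGF]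
    exact (hcF.of_le hs').add contDiff_const) he
  obtain ⟨K2, hK2, hk2⟩ := lip_of_c1 (G := Ge.symm) (by
    change ContDiff ℝ 1 (fun z => F' (z - a))
    exact (hcF'.of_le hs').comp (contDiff_id.sub contDiff_const)) hsy
  refine ⟨Ge, hGe, hsy, max K1 K2, hK1.trans (le_max_left _ _), fun x y => ?_, fun x y => ?_⟩
  · exact (hk1 x y).trans (by gcongr; exact le_max_left _ _)
  · exact (hk2 x y).trans (by gcongr; exact le_max_right _ _)

lemma equivariant_iter {Q : R2 → R2} (he : Equivariant Q) (n : ℕ) : Equivariant (Q^[n]) := by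
  induction n with
  | zero => intro z v; rfl
  | succ n ih => intro z v; rw [Function.iterate_succ_apply', ih, he, Function.iterate_succ_apply']

lemma isLift_iter {Q : R2 → R2} {q : T2 → T2} (h : IsLift Q q) (n : ℕ) :
    IsLift (Q^[n]) (q^[n]) := by
  induction n with
  | zero => intro z; rfl
  | succ n ih => intro z; rw [Function.iterate_succ_apply', h, ih, Function.iterate_succ_apply']

lemma lip_iter {Q : R2 → R2} {L : ℝ} (hL : 1 ≤ L) (h : ∀ x y, ‖Q x - Q y‖ ≤ L * ‖x - y‖)
    (n : ℕ) : ∀ x y, ‖Q^[n] x - Q^[n] y‖ ≤ L ^ n * ‖x - y‖ := by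
  induction n with
  | zero => intro x y; simp
  | succ n ih =>
    intro x y
    rw [Function.iterate_succ_apply', Function.iterate_succ_apply']
    refine (h _ _).trans ?_
    rw [pow_succ', mul_assoc]
    have := ih x y
    gcongr

lemma trans_iter {Q H : R2 → R2} {ε : R2} (h : ∀ z, H (Q z) = H z + ε) (n : ℕ) :
    ∀ z, H (Q^[n] z) = H z + (n : ℝ) • ε := by
  induction n with
  | zero => intro z; simp
  | succ n ih =>
    intro z
    rw [Function.iterate_succ_apply', h, ih]
    push_cast
    rw [add_smul, one_smul, add_assoc]

lemma exists_near_lift (x : T2) (a : R2) : ∃ z, pr2 z = x ∧ ‖z - a‖ ≤ 1 := by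
  obtain ⟨y, rfl⟩ := pr2_surjective x
  refine ⟨y - intVec (⌊y.1 - a.1⌋, ⌊y.2 - a.2⌋), ?_, ?_⟩
  · rw [pr2_sub, pr2_intVec, sub_zero]
  · rw [Prod.norm_def]
    simp only [intVec, Prod.fst_sub, Prod.snd_sub, Real.norm_eq_abs]
    refine max_le ?_ ?_
    · rw [abs_le]
      have := Int.floor_le (y.1 - a.1)
      have := Int.lt_floor_add_one (y.1 - a.1)
      constructor <;> linarith
    · rw [abs_le]
      have := Int.floor_le (y.2 - a.2)
      have := Int.lt_floor_add_one (y.2 - a.2)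
      constructor <;> linarith

lemma vol_ball (x : R2) {ρ : ℝ} (h0 : 0 < ρ) (h1 : ρ ≤ 1) :
    ENNReal.ofReal (ρ ^ 2) ≤ volume (pr2 '' Metric.ball x ρ) := by
  have hsub : (Metric.closedBall (x.1 : AddCircle (1:ℝ)) (ρ/2)) ×ˢ
      (Metric.closedBall (x.2 : AddCircle (1:ℝ)) (ρ/2)) ⊆ pr2 '' Metric.ball x ρ := by
    have hone : ∀ (a : ℝ) (y : AddCircle (1:ℝ)), y ∈ Metric.closedBall (a : AddCircle (1:ℝ)) (ρ/2) →
        ∃ b : ℝ, (b : AddCircle (1:ℝ)) = y ∧ |b - a| < ρ := by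
      intro a y hy
      obtain ⟨b, rfl⟩ := QuotientAddGroup.mk_surjective y
      rw [Metric.mem_closedBall, dist_eq_norm] at hy
      have hy' : ‖((b - a : ℝ) : AddCircle (1:ℝ))‖ ≤ ρ / 2 := hy
      rw [AddCircle.norm_eq] at hy'
      refine ⟨b - round (b - a), ?_, ?_⟩
      · have : (((round (b - a) : ℤ) : ℝ) : AddCircle (1:ℝ)) = 0 :=
          AddCircle.coe_eq_zero_iff 1 |>.2 ⟨round (b-a), by simp⟩
        rw [AddCircle.coe_sub, this, sub_zero]
      · simp only [inv_one, one_mul, mul_one] at hy'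
        calc _ = |b - a - round (b - a)| := by congr 1; ring
          _ ≤ ρ / 2 := hy'
          _ < ρ := by linarith
    rintro ⟨y1, y2⟩ ⟨hy1, hy2⟩
    obtain ⟨b1, h1, h1'⟩ := hone _ _ hy1
    obtain ⟨b2, h2, h2'⟩ := hone _ _ hy2
    refine ⟨(b1, b2), ?_, Prod.ext h1 h2⟩
    rw [Metric.mem_ball, dist_eq_norm, Prod.norm_def]
    exact max_lt h1' h2'
  refine le_trans ?_ (measure_mono hsub)
  rw [Measure.volume_eq_prod, Measure.prod_prod, AddCircle.volume_closedBall,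
    AddCircle.volume_closedBall, ← ENNReal.ofReal_mul (by positivity)]
  apply ENNReal.ofReal_le_ofReal
  rw [show 2 * (ρ/2) = ρ by ring, min_eq_right h1, sq]


open Classical in
/-- Multiplicity bound for the visits of an orbit segment to a free disc. -/
lemma visits_le (Q : R2 ≃ₜ R2) (he : Equivariant Q) {q : T2 → T2} (hl : IsLift Q q)
    {H : R2 → R2} {κ : ℝ} (hH : ∀ z, ‖H z - z‖ ≤ κ) {ε : R2} (hε : ε ≠ 0)
    (hQ : ∀ z, H (Q z) = H z + ε) {x : R2} {ρ : ℝ} (hρ : ρ ≤ 1)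
    (hfree : ∀ y ∈ Metric.ball x ρ, Q y ∉ Metric.ball x ρ)
    {N : ℕ} (hN : (N : ℝ) * ‖ε‖ ≤ 1) (m : ℕ) (hm : 2 * κ + 3 ≤ m) (p : T2) :
    {i ∈ Finset.range N | q^[i] p ∈ pr2 '' Metric.ball x ρ}.card ≤ (2 * m + 1) ^ 2 := by
  obtain ⟨z, rfl, hz⟩ := exists_near_lift p x
  have hmem : ∀ i, q^[i] (pr2 z) ∈ pr2 '' Metric.ball x ρ →
      ∃ v, Q^[i] z + intVec v ∈ Metric.ball x ρ := by
    rintro i ⟨y, hy, hyi⟩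
    rw [← isLift_iter hl i z] at hyi
    obtain ⟨v, hv⟩ := pr2_eq_iff.1 hyi
    exact ⟨v, hv ▸ hy⟩
  choose! V hV using hmem
  obtain ⟨K, -, hK⟩ := equiv_bdd Q.continuous he
  have hfix : ∀ z, Q z ≠ z := by
    intro z hz
    have := hQ z
    rw [hz] at this
    exact hε (left_eq_add.1 this)
  have key : ∀ i j, i < j → q^[i] (pr2 z) ∈ pr2 '' Metric.ball x ρ →
      q^[j] (pr2 z) ∈ pr2 '' Metric.ball x ρ → V i = V j → False := by
    intro i j hij hi hj hv
    have h1 := hV i hi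
    have h2 := hV j hj
    have := brouwer_plane Q hK hfix Metric.isOpen_ball
      (convex_ball x ρ).isPreconnected hfree h1 (j := j - i) (by omega)
    apply this
    rw [equivariant_iter he, ← Function.iterate_add_apply, hv, Nat.sub_add_cancel hij.le]
    exact h2
  have hcard : (Finset.Icc (-(m:ℤ)) m ×ˢ Finset.Icc (-(m:ℤ)) m).card = (2 * m + 1) ^ 2 := by
    rw [Finset.card_product, Int.card_Icc, sq]
    congr 1 <;> omega
  rw [← hcard]
  refine Finset.card_le_card_of_injOn V ?_ ?_
  · intro i hi
    simp only [Finset.coe_filter, Finset.mem_range, Set.mem_ofPred_eq] at hi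
    have h1 := hV i hi.2
    rw [Metric.mem_ball, dist_eq_norm] at h1
    have h2 : ‖Q^[i] z - z‖ ≤ 2 * κ + 1 := by
      have e : Q^[i] z - z = (H z - z) - (H (Q^[i] z) - Q^[i] z) + (i : ℝ) • ε := by
        rw [trans_iter hQ]; abel
      rw [e]
      have h3 : ‖(i : ℝ) • ε‖ ≤ 1 := by
        rw [norm_smul, Real.norm_natCast]
        refine le_trans ?_ hN
        have : (i : ℝ) ≤ N := by exact_mod_cast hi.1.le
        gcongr
      have := norm_add_le ((H z - z) - (H (Q^[i] z) - Q^[i] z)) ((i : ℝ) • ε)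
      have := norm_sub_le (H z - z) (H (Q^[i] z) - Q^[i] z)
      have := hH z
      have := hH (Q^[i] z)
      linarith
    have h4 : ‖intVec (V i)‖ ≤ m := by
      have e : intVec (V i) = (Q^[i] z + intVec (V i) - x) - (Q^[i] z - z) - (z - x) := by abel
      rw [e]
      have := norm_sub_le ((Q^[i] z + intVec (V i) - x) - (Q^[i] z - z)) (z - x)
      have := norm_sub_le (Q^[i] z + intVec (V i) - x) (Q^[i] z - z)
      linarith
    rw [Prod.norm_def, max_le_iff] at h4
    simp only [intVec, Real.norm_eq_abs, abs_le] at h4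
    simp only [Finset.coe_product, Set.mem_prod, Finset.coe_Icc, Set.mem_Icc]
    obtain ⟨⟨a, b⟩, c, d⟩ := h4
    exact ⟨⟨by exact_mod_cast a, by exact_mod_cast b⟩, by exact_mod_cast c, by exact_mod_cast d⟩
  · intro i hi j hj hij
    simp only [Finset.coe_filter, Finset.mem_range, Set.mem_ofPred_eq] at hi hj
    rcases lt_trichotomy i j with h | h | h
    · exact (key i j h hi.2 hj.2 hij).elim
    · exact h
    · exact (key j i h hj.2 hi.2 hij.symm).elim

open Classical in
lemma measure_bound {q : T2 → T2} (hmp : MeasurePreserving q (volume : Measure T2) volume)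
    {S : Set T2} (hS : MeasurableSet S) {N C : ℕ}
    (h : ∀ p, {i ∈ Finset.range N | q^[i] p ∈ S}.card ≤ C) :
    (N : ENNReal) * volume S ≤ C := by
  have hm : ∀ i, MeasurableSet (q^[i] ⁻¹' S) := fun i => (hmp.iterate i).measurable hS
  have e1 : ∫⁻ p : T2, ∑ i ∈ Finset.range N, (q^[i] ⁻¹' S).indicator (1 : T2 → ENNReal) p
      = N * volume S := by
    rw [lintegral_finsetSum _ (fun i _ => measurable_one.indicator (hm i))]
    have : ∀ i ∈ Finset.range N, ∫⁻ p : T2, (q^[i] ⁻¹' S).indicator (1 : T2 → ENNReal) p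
        = volume S := by
      intro i _
      rw [lintegral_indicator_one (hm i), (hmp.iterate i).measure_preimage hS.nullMeasurableSet]
    rw [Finset.sum_congr rfl this]
    simp
  have e2 : ∀ p : T2, ∑ i ∈ Finset.range N, (q^[i] ⁻¹' S).indicator (1 : T2 → ENNReal) p ≤ C := by
    intro p
    have : ∑ i ∈ Finset.range N, (q^[i] ⁻¹' S).indicator (1 : T2 → ENNReal) p
        = ({i ∈ Finset.range N | q^[i] p ∈ S}.card : ENNReal) := by
      simp only [Set.indicator_apply, Set.mem_preimage, Pi.one_apply]
      rw [Finset.sum_boole]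
    rw [this]
    exact_mod_cast h p
  rw [← e1]
  calc _ ≤ ∫⁻ _ : T2, (C : ENNReal) := lintegral_mono e2
    _ = C := by simp

lemma estimate (κ : ℝ) (hκ : 0 ≤ κ) : ∃ A : ℝ, 0 < A ∧ ∀ (Q : R2 ≃ₜ R2) (_ : Equivariant Q)
    (q : T2 → T2) (_ : IsLift Q q) (_ : MeasurePreserving q (volume : Measure T2) volume)
    (H : R2 → R2) (_ : ∀ z, ‖H z - z‖ ≤ κ) (ε : R2) (_ : ε ≠ 0) (_ : ‖ε‖ ≤ 1)
    (_ : ∀ z, H (Q z) = H z + ε) (L : ℝ) (_ : 1 ≤ L) (_ : ∀ x y, ‖Q x - Q y‖ ≤ L * ‖x - y‖)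
    (x : R2), ‖Q x - x‖ ^ 2 ≤ A * (1 + L) ^ 2 * ‖ε‖ := by
  obtain ⟨m, hm⟩ := exists_nat_ge (2 * κ + 3)
  refine ⟨(4 * κ + 2) ^ 2 * 2 * ((2 * m + 1) ^ 2 : ℕ), by positivity, ?_⟩
  intro Q he q hl hmp H hH ε hε hε1 hQ L hL hLip x
  have hεp : 0 < ‖ε‖ := norm_pos_iff.2 hε
  set δ := ‖Q x - x‖ with hδ
  have hδ0 : 0 < δ := by
    refine norm_pos_iff.2 (sub_ne_zero.2 fun h => hε ?_)
    have := hQ x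
    rw [h] at this
    exact left_eq_add.1 this
  have hδ1 : δ ≤ 2 * κ + 1 := by
    have e : Q x - x = (H x - x) - (H (Q x) - Q x) + ε := by rw [hQ]; abel
    rw [hδ, e]
    have := norm_add_le ((H x - x) - (H (Q x) - Q x)) ε
    have := norm_sub_le (H x - x) (H (Q x) - Q x)
    have := hH x
    have := hH (Q x)
    linarith
  set ρ := δ / ((1 + L) * (4 * κ + 2)) with hρ
  have hden : 0 < (1 + L) * (4 * κ + 2) := by positivity
  have hρδ : ρ * ((1 + L) * (4 * κ + 2)) = δ := div_mul_cancel₀ _ hden.ne'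
  have hρ0 : 0 < ρ := by positivity
  have hρ1 : ρ ≤ 1 := by
    rw [hρ, div_le_one hden]
    nlinarith
  have hρ2 : (1 + L) * ρ ≤ δ := by
    rw [← hρδ]
    nlinarith [mul_pos (show 0 < 1 + L by linarith) hρ0]
  have hfree : ∀ y ∈ Metric.ball x ρ, Q y ∉ Metric.ball x ρ := by
    intro y hy hy'
    rw [Metric.mem_ball, dist_eq_norm] at hy hy'
    have h1 := hLip x y
    rw [norm_sub_rev x y] at h1
    have h2 := norm_add_le (Q x - Q y) (Q y - x)
    rw [sub_add_sub_cancel] at h2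
    have h3 : L * ‖y - x‖ < L * ρ := by gcongr
    linarith
  set N := ⌊1 / ‖ε‖⌋₊ with hNdef
  have hN : (N : ℝ) * ‖ε‖ ≤ 1 := by
    rw [← le_div_iff₀ hεp]
    exact Nat.floor_le (by positivity)
  have hN1 : 1 ≤ N := Nat.le_floor (by rw [le_div_iff₀ hεp]; simpa using hε1)
  have hN2 : 1 ≤ 2 * (N : ℝ) * ‖ε‖ := by
    have h1 : 1 / ‖ε‖ < N + 1 := Nat.lt_floor_add_one _
    rw [div_lt_iff₀ hεp] at h1
    have h2 : (1 : ℝ) ≤ N := by exact_mod_cast hN1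
    nlinarith
  have hb := measure_bound hmp (S := pr2 '' Metric.ball x ρ) (N := N)
    (pr2_isOpenMap _ Metric.isOpen_ball).measurableSet
    (visits_le Q he hl hH hε hQ hρ1 hfree hN m hm)
  have hv := vol_ball x hρ0 hρ1
  have hfin : (N : ℝ) * ρ ^ 2 ≤ ((2 * m + 1) ^ 2 : ℕ) := by
    have h1 : ENNReal.ofReal ((N : ℝ) * ρ ^ 2) ≤ ENNReal.ofReal (((2 * m + 1) ^ 2 : ℕ) : ℝ) := by
      rw [ENNReal.ofReal_mul (by positivity), ENNReal.ofReal_natCast, ENNReal.ofReal_natCast]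
      exact le_trans (by gcongr) hb
    exact (ENNReal.ofReal_le_ofReal_iff (by positivity)).1 h1
  generalize (((2 * m + 1) ^ 2 : ℕ) : ℝ) = C at *
  have h5 : ρ ^ 2 ≤ 2 * C * ‖ε‖ := by
    have : ρ ^ 2 * 1 ≤ ρ ^ 2 * (2 * (N : ℝ) * ‖ε‖) := by gcongr
    nlinarith
  rw [← hρδ]
  calc (ρ * ((1 + L) * (4 * κ + 2))) ^ 2 = ρ ^ 2 * ((1 + L) * (4 * κ + 2)) ^ 2 := by ring
    _ ≤ (2 * C * ‖ε‖) * ((1 + L) * (4 * κ + 2)) ^ 2 := by gcongr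
    _ = _ := by ring


lemma norm_le_enorm2 (v : R2) : ‖v‖ ≤ enorm2 v := by
  rw [Prod.norm_def]
  unfold enorm2
  refine max_le ?_ ?_
  · rw [Real.norm_eq_abs]; exact Real.abs_le_sqrt (by nlinarith [sq_nonneg v.2])
  · rw [Real.norm_eq_abs]; exact Real.abs_le_sqrt (by nlinarith [sq_nonneg v.1])

lemma exists_good {ω : R2} (hti : TotallyIrrationalVec ω) (hsl : SuperLiouville ω) {a : ℝ}
    (ha0 : 0 < a) (ha1 : a ≤ 1) :
    ∃ n : ℕ, 1 ≤ n ∧ ∃ v, (n : ℝ) • ω - intVec v ≠ 0 ∧ ‖(n : ℝ) • ω - intVec v‖ ≤ a ^ n := by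
  obtain ⟨n, hn, hn1⟩ := ((hsl (Real.log a)).and_eventually (eventually_ge_atTop 1)).exists
  refine ⟨n, hn1, ?_⟩
  have hnp : (0 : ℝ) < n := by exact_mod_cast hn1
  have h1 : Real.log (normT2 ((n : ℝ) • ω)) < Real.log (a ^ n) := by
    rw [Real.log_pow]
    rwa [inv_mul_lt_iff₀ hnp] at hn
  have h0 : 0 ≤ normT2 ((n : ℝ) • ω) := Real.iInf_nonneg fun v => Real.sqrt_nonneg _
  have h2 : Real.log (a ^ n) ≤ 0 := Real.log_nonpos (by positivity) (pow_le_one₀ ha0.le ha1)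
  have h3 : 0 < normT2 ((n : ℝ) • ω) := by
    rcases h0.lt_or_eq with h | h
    · exact h
    · rw [← h, Real.log_zero] at h1; linarith
  have h4 : normT2 ((n : ℝ) • ω) < a ^ n := (Real.log_lt_log_iff h3 (by positivity)).1 h1
  obtain ⟨v, hv⟩ := exists_lt_of_ciInf_lt h4
  refine ⟨v, ?_, (norm_le_enorm2 _).trans hv.le⟩
  intro h
  have e := congrArg Prod.fst h
  simp [intVec] at e
  have := hti n 0 (-v.1) (by push_cast; linarith)
  have := this.1
  omega

/-- Combining the estimate with the super-Liouville condition. -/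
lemma eq_id_of_semiconj {ω : R2} (hti : TotallyIrrationalVec ω) (hsl : SuperLiouville ω)
    (F G : R2 ≃ₜ R2) (hFe : Equivariant F) (hGe : Equivariant G) {f g : T2 → T2}
    (hFl : IsLift F f) (hGl : IsLift G g)
    (hf : MeasurePreserving f (volume : Measure T2) volume)
    (hg : MeasurePreserving g (volume : Measure T2) volume)
    {H : R2 → R2} (hHc : Continuous H) (hHe : Equivariant H)
    (hHF : ∀ z, H (F z) = H z + ω) (hHG : ∀ z, H (G z) = H z)
    {L K : ℝ} (hL : 1 ≤ L) (hK : 1 ≤ K) (hLF : ∀ x y, ‖F x - F y‖ ≤ L * ‖x - y‖)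
    (hKG : ∀ x y, ‖G x - G y‖ ≤ K * ‖x - y‖) : ∀ x, G x = x := by
  obtain ⟨κ, hκ, hHκ⟩ := equiv_bdd hHc hHe
  obtain ⟨A, hA, hest⟩ := estimate κ hκ
  have main : ∀ δ : ℝ, 0 < δ → ∃ (P : R2 → R2), ∀ x, ‖P (G x) - x‖ ^ 2 ≤ δ ∧ ‖P x - x‖ ^ 2 ≤ δ := by
    intro δ hδ
    set t := min 1 (δ / (A * (1 + K) ^ 2)) with ht
    have ht0 : 0 < t := by positivity
    have ht1 : t ≤ 1 := min_le_left _ _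
    have ht2 : A * (1 + K) ^ 2 * t ≤ δ := by
      have : t ≤ δ / (A * (1 + K) ^ 2) := min_le_right _ _
      rw [le_div_iff₀ (by positivity)] at this
      linarith
    have hL2 : 1 ≤ L ^ 2 := one_le_pow₀ hL
    obtain ⟨n, hn, v, hv0, hv⟩ := exists_good hti hsl (a := t / L ^ 2) (by positivity)
      (by rw [div_le_one (by positivity)]; linarith)
    set ε := (n : ℝ) • ω - intVec v with hεd
    have hLn : 1 ≤ L ^ n := one_le_pow₀ hL
    have htn : t ^ n ≤ t := by
      calc t ^ n ≤ t ^ 1 := pow_le_pow_of_le_one ht0.le ht1 hn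
        _ = t := pow_one t
    have hε : ‖ε‖ * (L ^ n) ^ 2 ≤ t := by
      have : (t / L ^ 2) ^ n = t ^ n / (L ^ n) ^ 2 := by
        rw [div_pow, ← pow_mul, ← pow_mul, mul_comm]
      rw [this, le_div_iff₀ (by positivity)] at hv
      exact hv.trans htn
    have hε1 : ‖ε‖ ≤ 1 := by
      have : ‖ε‖ * 1 ≤ ‖ε‖ * (L ^ n) ^ 2 := by
        gcongr
        exact one_le_pow₀ hLn
      linarith
    have bound : ∀ M, 1 ≤ M → M ≤ K * L ^ n → A * (1 + M) ^ 2 * ‖ε‖ ≤ δ := by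
      intro M hM hM2
      have h1 : 1 + M ≤ (1 + K) * L ^ n := by nlinarith
      calc A * (1 + M) ^ 2 * ‖ε‖ ≤ A * ((1 + K) * L ^ n) ^ 2 * ‖ε‖ := by gcongr
        _ = A * (1 + K) ^ 2 * (‖ε‖ * (L ^ n) ^ 2) := by ring
        _ ≤ A * (1 + K) ^ 2 * t := by gcongr
        _ ≤ δ := ht2
    let Fn : R2 ≃ₜ R2 := F ^ n
    have hFn : ⇑Fn = F^[n] := by
      simp only [Fn]
      clear_value t ε
      clear * -
      induction n with
      | zero => rfl
      | succ n ih =>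
        rw [pow_succ', Function.iterate_succ', ← ih]; rfl
    let P : R2 ≃ₜ R2 := Fn.trans (Homeomorph.subRight (intVec v))
    have hP : ∀ z, P z = F^[n] z - intVec v := fun z => by
      rw [← hFn]; rfl
    have hPe : Equivariant P := by
      intro z u
      rw [hP, hP, equivariant_iter hFe]; abel
    have hPl : IsLift P f^[n] := by
      intro z
      rw [hP, pr2_sub, isLift_iter hFl, pr2_intVec, sub_zero]
    have hPH : ∀ z, H (P z) = H z + ε := by
      intro z
      have h1 := hHe (P z) v
      rw [hP, sub_add_cancel, trans_iter hHF] at h1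
      rw [hP, hεd, ← add_sub_assoc, h1]; abel
    have hPL : ∀ x y, ‖P x - P y‖ ≤ L ^ n * ‖x - y‖ := by
      intro x y
      rw [hP, hP, sub_sub_sub_cancel_right]
      exact lip_iter hL hLF n x y
    let R : R2 ≃ₜ R2 := G.trans P
    have hR : ∀ z, R z = P (G z) := fun z => rfl
    refine ⟨P, fun x => ⟨?_, ?_⟩⟩
    · rw [← hR]
      refine (hest R (fun z u => by rw [hR, hR, hGe, hPe]) (f^[n] ∘ g)
        (fun z => by rw [hR, hPl, hGl]; rfl) ((hf.iterate n).comp hg) H hHκ ε hv0 hε1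
        (fun z => by rw [hR, hPH, hHG]) (K * L ^ n) (by nlinarith) (fun x y => ?_) x).trans
        (bound _ (by nlinarith) le_rfl)
      rw [hR, hR]
      calc _ ≤ L ^ n * ‖G x - G y‖ := hPL _ _
        _ ≤ L ^ n * (K * ‖x - y‖) := by gcongr; exact hKG x y
        _ = _ := by ring
    · exact (hest P hPe (f^[n]) hPl (hf.iterate n) H hHκ ε hv0 hε1 hPH (L ^ n) hLn hPL x).trans
        (bound _ hLn (by nlinarith))
  intro x
  by_contra hne
  have hpos : 0 < ‖G x - x‖ := norm_pos_iff.2 (sub_ne_zero.2 hne)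
  obtain ⟨P, hP⟩ := main ((‖G x - x‖ / 3) ^ 2) (by positivity)
  have h1 : ‖P (G x) - x‖ ≤ ‖G x - x‖ / 3 := (sq_le_sq₀ (norm_nonneg _) (by positivity)).1 (hP x).1
  have h2 : ‖P (G x) - G x‖ ≤ ‖G x - x‖ / 3 :=
    (sq_le_sq₀ (norm_nonneg _) (by positivity)).1 (hP (G x)).2
  have h3 := norm_sub_le (P (G x) - x) (P (G x) - G x)
  rw [sub_sub_sub_cancel_left] at h3
  linarith

lemma lift_cont {s : ℕ∞} {g : T2 → T2} (hg : IsCrDiffeo s g) (n : ℕ) : IsCrDiffeo s g^[n] := by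
  obtain ⟨F, F', hF, hl, hr, hc, hc'⟩ := hg
  have hit : ∀ {F : R2 → R2}, ContDiff ℝ s F → ContDiff ℝ s F^[n] := by
    intro F hF
    induction n with
    | zero => exact contDiff_id
    | succ n ih => rw [Function.iterate_succ]; exact ih.comp hF
  exact ⟨F^[n], F'^[n], isLift_iter hF n, hl.iterate n, hr.iterate n, hit hc, hit hc'⟩

lemma homeo_iter {X : Type*} [TopologicalSpace X] {f : X → X} (h : IsHomeomorph f) (n : ℕ) :
    IsHomeomorph f^[n] := by
  induction n with
  | zero => exact IsHomeomorph.id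
  | succ n ih => rw [Function.iterate_succ]; exact ih.comp h

lemma isotopic_iter {f : T2 → T2} (h : IsotopicToId f) (n : ℕ) : IsotopicToId f^[n] := by
  obtain ⟨h1, F, hF, hl, he⟩ := h
  exact ⟨homeo_iter h1 n, F^[n], homeo_iter hF n, isLift_iter hl n, equivariant_iter he n⟩

lemma diff_const {f g h : T2 → T2} {w x0 : T2} (hx0 : Dense (Set.range fun n : ℕ => f^[n] x0))
    (hg : Continuous g) (hh : Continuous h) (hc : g ∘ f = f ∘ g)
    (hf : ∀ x, h (f x) = h x + w) : ∀ x, h (g x) = h x + (h (g x0) - h x0) := by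
  have e1 : ∀ n x, g (f^[n] x) = f^[n] (g x) := fun n x =>
    (Function.Commute.iterate_right (f := g) (g := f) (fun x => congrFun hc x) n) x
  have e2 : ∀ (n : ℕ) x, h (f^[n] x) = h x + n • w := by
    intro n
    induction n with
    | zero => intro x; simp
    | succ n ih => intro x; rw [Function.iterate_succ_apply', hf, ih, succ_nsmul, add_assoc]
  have := Continuous.ext_on hx0 (f := fun x => h (g x))
    (g := fun x => h x + (h (g x0) - h x0)) (by fun_prop) (by fun_prop) (by
      rintro _ ⟨n, rfl⟩
      simp only [e1, e2]; abel)
  exact fun x => congrFun this x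

/-- **Section 5.1.** In the setting of Theorem 1.4, both φ₁ : G_f → ℝ²/ℤ², g ↦ ρ(g), and
φ₂ : G_f → 𝕋², g ↦ g(x₀) (for x₀ with dense f-orbit) are injective; moreover φ₁ is a group
homomorphism with dense image. -/
theorem phi1_phi2_injective
    (r : ℕ∞) (hr : 2 ≤ r)
    (f : T2 → T2) (ω : R2) (w : T2)
    (hw : pr2 ω = w)
    (hti : TotallyIrrationalVec ω)
    (hsl : SuperLiouville ω)
    (hiso : IsotopicToId f)
    (hcr : IsCrDiffeo r f)
    (hmp : MeasurePreserving f (volume : Measure T2) volume)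
    (hsc : RegSemiConj f w)
    (x0 : T2) (hx0 : Dense (Set.range fun n : ℕ => f^[n] x0))
    (GF : Set C(T2, T2))
    (hGF : GF = {g : C(T2, T2) | IsCrDiffeo (r - 1) ⇑g ∧ IsotopicToId ⇑g ∧
      MeasurePreserving ⇑g (volume : Measure T2) volume ∧ ⇑g ∘ f = f ∘ ⇑g}) :
    (∀ g1 ∈ GF, ∀ g2 ∈ GF, ∀ u : T2, IsRotOf ⇑g1 u → IsRotOf ⇑g2 u → g1 = g2) ∧
    (∀ g1 ∈ GF, ∀ g2 ∈ GF, ∀ u1 u2 : T2, IsRotOf ⇑g1 u1 → IsRotOf ⇑g2 u2 →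
      IsRotOf (⇑g1 ∘ ⇑g2) (u1 + u2)) ∧
    Dense {u : T2 | ∃ g ∈ GF, IsRotOf ⇑g u} ∧
    (∀ g1 ∈ GF, ∀ g2 ∈ GF, g1 x0 = g2 x0 → g1 = g2) := by
  have hr1 : 1 ≤ r - 1 := by
    have : (1 : ℕ∞) + 1 ≤ r := by rw [one_add_one_eq_two]; exact hr
    exact ENat.le_sub_of_add_le_right (by simp) this
  obtain ⟨h, hhc, hhs, ⟨H, hHc, hHl, hHe⟩, hhf⟩ := hsc
  have hfc : Continuous f := hiso.1.continuous
  have hcr1 : IsCrDiffeo (r - 1) f := by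
    obtain ⟨F, F', hF, hl, hr, hc, hc'⟩ := hcr
    have : ((r - 1 : ℕ∞) : WithTop ℕ∞) ≤ (r : WithTop ℕ∞) := by exact_mod_cast tsub_le_self
    exact ⟨F, F', hF, hl, hr, hc.of_le this, hc'.of_le this⟩
  subst hGF
  refine ⟨?_, ?_, ?_, ?_⟩
  · rintro g1 ⟨hd1, hi1, hm1, hc1⟩ g2 ⟨hd2, hi2, hm2, hc2⟩ u hu1 hu2
    obtain ⟨G1, Φ1, hG1c, hG1l, hG1e, hΦ1, hu1⟩ := hu1
    obtain ⟨G2, Φ2, hG2c, hG2l, hG2e, hΦ2, hu2⟩ := hu2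
    have r1 := (rot_eq hm1 g1.continuous hG1c hG1l hHc hHl hHe
      (diff_const hx0 g1.continuous hhc hc1 hhf) hΦ1).1
    have r2 := (rot_eq hm2 g2.continuous hG2c hG2l hHc hHl hHe
      (diff_const hx0 g2.continuous hhc hc2 hhf) hΦ2).1
    obtain ⟨v, hv⟩ := pr2_eq_iff.1 (hu2.symm.trans hu1)
    obtain ⟨A1, hA1, -, K1, hK1, hl1, -⟩ := lift_pack hr1 hd1 hG1c hG1l hG1e
    obtain ⟨A2, hA2, hA2e, K2, hK2, -, hl2⟩ := lift_pack hr1 hd2 hG2c hG2l hG2e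
    obtain ⟨-, F0, hF0, hF0l, hF0e⟩ := hiso
    obtain ⟨Φ0, hΦ0c, hΦ0⟩ := descend (k := fun z => F0 z - z)
      (hF0.continuous.sub continuous_id) (by intro z v; rw [hF0e]; abel)
    obtain ⟨r0, r0'⟩ := rot_eq hmp hfc hF0.continuous hF0l hHc hHl hHe hhf hΦ0
    obtain ⟨v0, hv0⟩ := pr2_eq_iff.1 (r0'.trans hw.symm)
    have hFe : Equivariant (fun z => F0 z - intVec v0) := by
      intro z u
      change F0 (z + intVec u) - intVec v0 = F0 z - intVec v0 + intVec u
      rw [hF0e]; abel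
    have hFl : IsLift (fun z => F0 z - intVec v0) f := by
      intro z; rw [pr2_sub, pr2_intVec, sub_zero, hF0l]
    obtain ⟨F, hF, -, L, hL, hLF, -⟩ := lift_pack hr1 hcr1
      (G := fun z => F0 z - intVec v0) (hF0.continuous.sub continuous_const) hFl hFe
    rw [← hF] at hFe hFl
    have hHF : ∀ z, H (F z) = H z + ω := by
      intro z
      have h1 := hHe (F z) v0
      rw [hF] at h1
      simp only [sub_add_cancel, r0, hv0] at h1
      rw [hF]
      rw [← add_assoc] at h1
      exact (add_right_cancel h1).symm
    let e2 : T2 ≃ₜ T2 := hi2.1.homeomorph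
    have he2 : ∀ x, e2 x = g2 x := fun x => rfl
    have hm2' : MeasurePreserving e2.symm (volume : Measure T2) volume :=
      MeasurePreserving.symm e2.toMeasurableEquiv hm2
    let G : R2 ≃ₜ R2 := (A1.trans (Homeomorph.addRight (intVec v))).trans A2.symm
    have hG : ∀ z, G z = A2.symm (A1 z + intVec v) := fun z => rfl
    have hA2G : ∀ z, A2 (G z) = A1 z + intVec v := fun z => by rw [hG, A2.apply_symm_apply]
    have hid := eq_id_of_semiconj hti hsl F G hFe
      (by
        intro z u
        rw [hG, hG, hA1, hG1e, add_right_comm, hA2e])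
      (f := f) (g := e2.symm ∘ g1) hFl
      (by
        intro z
        apply e2.injective
        rw [Function.comp_apply, e2.apply_symm_apply, he2, ← hG2l, ← hA2, hA2G, pr2_add,
          pr2_intVec, add_zero, hA1, hG1l])
      hmp (hm2'.comp hm1) hHc hHe hHF
      (by
        intro z
        have h1 := r2 (G z)
        rw [← hA2, hA2G, hHe, hA1, r1, hv, add_assoc] at h1
        exact (add_right_cancel h1).symm)
      (L := L) (K := K2 * K1) hL (by nlinarith) hLF
      (by
        intro x y
        rw [hG, hG]
        refine (hl2 _ _).trans ?_
        rw [add_sub_add_right_eq_sub, mul_assoc]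
        have := hl1 x y
        gcongr)
    ext1 x
    obtain ⟨z, rfl⟩ := pr2_surjective x
    have h1 := hA2G z
    rw [hid, hA1, hA2] at h1
    rw [← hG1l, ← hG2l, h1, pr2_add, pr2_intVec, add_zero]
  · rintro g1 ⟨hd1, hi1, hm1, hc1⟩ g2 ⟨hd2, hi2, hm2, hc2⟩ u1 u2 hu1 hu2
    obtain ⟨G1, Φ1, hG1c, hG1l, hG1e, hΦ1, rfl⟩ := hu1
    obtain ⟨G2, Φ2, hG2c, hG2l, hG2e, hΦ2, rfl⟩ := hu2
    have c1 : Continuous Φ1 := descend_cont (k := fun z => G1 z - z) (by fun_prop) hΦ1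
    have c2 : Continuous Φ2 := descend_cont (k := fun z => G2 z - z) (by fun_prop) hΦ2
    refine ⟨G1 ∘ G2, fun x => Φ1 (g2 x) + Φ2 x, hG1c.comp hG2c, ?_, ?_, ?_, ?_⟩
    · intro z; simp only [Function.comp_apply]; rw [hG1l, hG2l]
    · intro z v; simp only [Function.comp_apply]; rw [hG2e, hG1e]
    · intro z; simp only [Function.comp_apply]; rw [← hG2l, hΦ1, hΦ2]; abel
    · have i1 : Integrable (fun x => Φ1 (g2 x)) (volume : Measure T2) :=
        integrable_cont (c1.comp g2.continuous)
      rw [integral_add i1 (integrable_cont c2), integral_comp_mp hm2 c1, pr2_add]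
  · have e2 : ∀ (n : ℕ) x, h (f^[n] x) = h x + n • w := by
      intro n
      induction n with
      | zero => intro x; simp
      | succ n ih => intro x; rw [Function.iterate_succ_apply', hhf, ih, succ_nsmul, add_assoc]
    have hsub : Set.range (fun n : ℕ => n • w) ⊆ {u : T2 | ∃ g ∈ {g : C(T2, T2) |
        IsCrDiffeo (r - 1) ⇑g ∧ IsotopicToId ⇑g ∧
        MeasurePreserving ⇑g (volume : Measure T2) volume ∧ ⇑g ∘ f = f ∘ ⇑g}, IsRotOf ⇑g u} := by
      rintro _ ⟨n, rfl⟩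
      have hin := isotopic_iter hiso n
      refine ⟨⟨f^[n], hfc.iterate n⟩, ⟨lift_cont hcr1 n, hin, hmp.iterate n, ?_⟩, ?_⟩
      · change f^[n] ∘ f = f ∘ f^[n]
        rw [← Function.iterate_succ, Function.iterate_succ']
      · obtain ⟨-, F0, hF0, hF0l, hF0e⟩ := hin
        obtain ⟨Φ0, hΦ0c, hΦ0⟩ := descend (k := fun z => F0 z - z)
          (hF0.continuous.sub continuous_id) (by intro z v; rw [hF0e]; abel)
        obtain ⟨r0, r0'⟩ := rot_eq (hmp.iterate n) (hfc.iterate n) hF0.continuous hF0l hHc hHl hHe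
          (e2 n) hΦ0
        exact ⟨F0, Φ0, hF0.continuous, hF0l, hF0e, hΦ0, r0'.symm⟩
    refine Dense.mono hsub ?_
    have d1 : DenseRange (fun n : ℕ => f^[n] x0) := hx0
    have d2 := hhs.denseRange.comp d1 hhc
    have d3 := (Homeomorph.addLeft (-(h x0))).surjective.denseRange.comp d2
      (Homeomorph.addLeft (-(h x0))).continuous
    have : (fun n : ℕ => n • w) = (Homeomorph.addLeft (-(h x0))) ∘ (h ∘ fun n : ℕ => f^[n] x0) := by
      funext n
      simp [e2]
    rw [this]
    exact d3
  · rintro g1 ⟨-, -, -, hc1⟩ g2 ⟨-, -, -, hc2⟩ he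
    have e1 : ∀ (g : C(T2, T2)), ⇑g ∘ f = f ∘ ⇑g → ∀ n x, g (f^[n] x) = f^[n] (g x) :=
      fun g hc n x =>
      (Function.Commute.iterate_right (f := g) (g := f) (fun x => congrFun hc x) n) x
    apply DFunLike.coe_injective
    refine Continuous.ext_on hx0 g1.continuous g2.continuous ?_
    rintro _ ⟨n, rfl⟩
    simp only [e1 g1 hc1, e1 g2 hc2, he]
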